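/- Let (A, {Δ(λ)}) be a split quasi-hereditary algebra over a commutative Noetherian ring R. For each λ ∈ Λ there exists a partial tilting module T(λ) with exact sequences 0 → Δ(λ) → T(λ) → X(λ) → 0 and 0 → Y(λ) → T(λ) → ∇(λ) → 0, where X(λ) is filtered by standard modules Δ(μ) with μ < λ and Y(λ) is filtered by modules ∇(μ) ⊗_R U with μ < λ, U ∈ R-proj. Moreover, the inclusion Δ(λ) → T(λ) is a left F(∇̃)-approximation and the surjection T(λ) → ∇(λ) is a right F(Δ̃)-approximation. -/

import Mathlib

open scoped TensorProduct
open CategoryTheory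

noncomputable section

section Core

variable (R : Type) [CommRing R] (A : Type) [Ring A] [Algebra R A]

/-- The action of `a : A` on an `A`-module as an `R`-linear endomorphism. -/
def actL (M : Type) [AddCommGroup M] [Module R M] [Module A M] [IsScalarTower R A M]
    (a : A) : M →ₗ[R] M where
  toFun m := a • m
  map_add' := smul_add a
  map_smul' r m := (smul_comm r a m).symm

/-- The right `A`-module (i.e. `Aᵐᵒᵖ`-module) structure on the `R`-linear dual of a left
`A`-module `M`, given by `(aᵒᵖ • f) m = f (a • m)`. -/
instance dualModule (M : Type) [AddCommGroup M] [Module R M] [Module A M]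
    [IsScalarTower R A M] : Module Aᵐᵒᵖ (M →ₗ[R] R) where
  smul a f := f.comp (actL R A M a.unop)
  one_smul f := by ext m; show f ((1 : Aᵐᵒᵖ).unop • m) = f m; simp
  mul_smul a b f := by
    ext m
    show f ((a * b).unop • m) = f (b.unop • a.unop • m)
    simp [mul_smul]
  smul_zero a := rfl
  smul_add a f g := rfl
  add_smul a b f := by
    ext m
    show f ((a + b).unop • m) = f (a.unop • m) + f (b.unop • m)
    simp [add_smul]
  zero_smul f := by ext m; show f ((0 : Aᵐᵒᵖ).unop • m) = 0; simp

@[simp] lemma dualModule_smul_apply (M : Type) [AddCommGroup M] [Module R M] [Module A M]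
    [IsScalarTower R A M] (a : Aᵐᵒᵖ) (f : M →ₗ[R] R) (m : M) :
    (a • f) m = f (a.unop • m) := rfl

instance dualTower (M : Type) [AddCommGroup M] [Module R M] [Module A M]
    [IsScalarTower R A M] : IsScalarTower R Aᵐᵒᵖ (M →ₗ[R] R) := by
  constructor
  intro r a f
  ext m
  show f ((r • a).unop • m) = r • f (a.unop • m)
  rw [MulOpposite.unop_smul, smul_assoc, map_smul]

/-- The left `A`-module structure on the `R`-linear dual of a right `A`-module
(i.e. an `Aᵐᵒᵖ`-module) `M`, given by `(a • f) m = f (aᵒᵖ • m)`. -/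
instance dualModule' (M : Type) [AddCommGroup M] [Module R M] [Module Aᵐᵒᵖ M]
    [IsScalarTower R Aᵐᵒᵖ M] : Module A (M →ₗ[R] R) where
  smul a f := f.comp (actL R Aᵐᵒᵖ M (MulOpposite.op a))
  one_smul f := by ext m; show f (MulOpposite.op (1 : A) • m) = f m; simp
  mul_smul a b f := by
    ext m
    show f (MulOpposite.op (a * b) • m) = f (MulOpposite.op b • MulOpposite.op a • m)
    rw [MulOpposite.op_mul, mul_smul]
  smul_zero a := rfl
  smul_add a f g := rfl
  add_smul a b f := by
    ext m
    show f (MulOpposite.op (a + b) • m) = f (MulOpposite.op a • m) + f (MulOpposite.op b • m)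
    rw [MulOpposite.op_add, add_smul, map_add]
  zero_smul f := by ext m; show f (MulOpposite.op (0 : A) • m) = 0; simp

@[simp] lemma dualModule'_smul_apply (M : Type) [AddCommGroup M] [Module R M] [Module Aᵐᵒᵖ M]
    [IsScalarTower R Aᵐᵒᵖ M] (a : A) (f : M →ₗ[R] R) (m : M) :
    (a • f) m = f (MulOpposite.op a • m) := rfl

instance dualTower' (M : Type) [AddCommGroup M] [Module R M] [Module Aᵐᵒᵖ M]
    [IsScalarTower R Aᵐᵒᵖ M] : IsScalarTower R A (M →ₗ[R] R) := by
  constructor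
  intro r a f
  ext m
  show f (MulOpposite.op (r • a) • m) = r • f (MulOpposite.op a • m)
  rw [MulOpposite.op_smul, smul_assoc, map_smul]

variable (Λ : Type) [Fintype Λ] [PartialOrder Λ]

/-- Data witnessing that `X` is isomorphic to `Δ(λ) ⊗_R U` for some `λ ∈ S` and some finitely
generated projective `R`-module `U`. -/
structure TensorFactor (Δ : Λ → Type) [∀ l, AddCommGroup (Δ l)] [∀ l, Module R (Δ l)]
    [∀ l, Module A (Δ l)] [∀ l, IsScalarTower R A (Δ l)]
    (S : Set Λ) (X : Type) [AddCommGroup X] [Module A X] : Type 1 where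
  lam : Λ
  mem : lam ∈ S
  U : ModuleCat.{0} R
  fin : Module.Finite R U
  proj : Module.Projective R U
  iso : X ≃ₗ[A] (TensorProduct R (Δ lam) U)

/-- `M` belongs to `F(Δ̃_S)`: it is a finitely generated `A`-module with a finite filtration
whose factors are of the form `Δ(λ) ⊗_R U`, `λ ∈ S`, `U` a finitely generated projective
`R`-module. -/
def InFilt (Δ : Λ → Type) [∀ l, AddCommGroup (Δ l)] [∀ l, Module R (Δ l)]
    [∀ l, Module A (Δ l)] [∀ l, IsScalarTower R A (Δ l)]
    (S : Set Λ) (M : Type) [AddCommGroup M] [Module A M] : Prop :=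
  Module.Finite A M ∧
  ∃ (n : ℕ) (c : Fin (n + 1) → Submodule A M), c 0 = ⊥ ∧ c (Fin.last n) = ⊤ ∧ Monotone c ∧
    ∀ i : Fin n, Nonempty (TensorFactor R A Λ Δ S
      (↥(c i.succ) ⧸ (Submodule.comap (c i.succ).subtype (c i.castSucc))))

/-- Data witnessing that `X` is isomorphic to `F(λ)` for some `λ ∈ S`. -/
structure PlainFactor (F : Λ → Type) [∀ l, AddCommGroup (F l)] [∀ l, Module A (F l)]
    (S : Set Λ) (X : Type) [AddCommGroup X] [Module A X] : Type 1 where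
  lam : Λ
  mem : lam ∈ S
  iso : X ≃ₗ[A] F lam

/-- `M` has a finite filtration with factors among the modules `F(λ)`, `λ ∈ S`. -/
def InFiltPlain (F : Λ → Type) [∀ l, AddCommGroup (F l)] [∀ l, Module A (F l)]
    (S : Set Λ) (M : Type) [AddCommGroup M] [Module A M] : Prop :=
  Module.Finite A M ∧
  ∃ (n : ℕ) (c : Fin (n + 1) → Submodule A M), c 0 = ⊥ ∧ c (Fin.last n) = ⊤ ∧ Monotone c ∧
    ∀ i : Fin n, Nonempty (PlainFactor A Λ F S
      (↥(c i.succ) ⧸ (Submodule.comap (c i.succ).subtype (c i.castSucc))))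

/-- `X` is a direct summand of `Y` (as `A`-modules). -/
def IsDirectSummand (X Y : Type) [AddCommGroup X] [Module A X] [AddCommGroup Y]
    [Module A Y] : Prop :=
  ∃ (i : X →ₗ[A] Y) (p : Y →ₗ[A] X), p.comp i = LinearMap.id

/-- `X` belongs to the additive closure `add T`. -/
def InAdd (T : Type) [AddCommGroup T] [Module A T] (X : Type) [AddCommGroup X]
    [Module A X] : Prop :=
  ∃ n : ℕ, IsDirectSummand A X (Fin n → T)

/-- A split quasi-hereditary structure on the `R`-algebra `A` with standard modules
`Δ(λ)`, `λ ∈ Λ` (following Rouquier's module-theoretic definition). -/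
structure SplitQH (Δ : Λ → Type) [∀ l, AddCommGroup (Δ l)] [∀ l, Module R (Δ l)]
    [∀ l, Module A (Δ l)] [∀ l, IsScalarTower R A (Δ l)] : Type 1 where
  algFin : Module.Finite R A
  algProj : Module.Projective R A
  deltaFinA : ∀ l, Module.Finite A (Δ l)
  deltaFinR : ∀ l, Module.Finite R (Δ l)
  deltaProjR : ∀ l, Module.Projective R (Δ l)
  hom_le : ∀ l m : Λ, (∃ f : Δ l →ₗ[A] Δ m, f ≠ 0) → l ≤ m
  endIso : ∀ l, Nonempty ((Module.End A (Δ l)) ≃ₐ[R] R)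
  P : Λ → ModuleCat.{0} A
  P_proj : ∀ l, Module.Projective A (P l)
  P_fin : ∀ l, Module.Finite A (P l)
  epi : ∀ l, (P l : Type) →ₗ[A] Δ l
  epi_surj : ∀ l, Function.Surjective (epi l)
  ker_filt : ∀ l, InFilt R A Λ Δ {m | l < m} ↥(LinearMap.ker (epi l))
  add_gen : ∀ (Q : ModuleCat.{0} A), Module.Finite A Q → Module.Projective A Q →
    InAdd A (∀ l, (P l : Type)) Q

/-- Vanishing of `Ext^i_A(M, N)` (computed in the abelian category of `A`-modules). -/
def extVanish (M : Type) [AddCommGroup M] [Module A M] (N : Type) [AddCommGroup N]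
    [Module A N] (i : ℕ) : Prop :=
  Subsingleton (((Ext ℤ (ModuleCat.{0} A) i).obj
    (Opposite.op (ModuleCat.of A M))).obj (ModuleCat.of A N))

/-- `∇` is a family of costandard modules for the split quasi-hereditary algebra
`(A, {Δ(λ)})`: the `R`-linear duals `D∇(λ)` make `A^op` split quasi-hereditary (with the same
poset), and the `Ext`-orthogonality relations with the standard modules hold. -/
def IsCostandard (Δ : Λ → Type) [∀ l, AddCommGroup (Δ l)] [∀ l, Module R (Δ l)]
    [∀ l, Module A (Δ l)] [∀ l, IsScalarTower R A (Δ l)]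
    (N : Λ → Type) [∀ l, AddCommGroup (N l)] [∀ l, Module R (N l)]
    [∀ l, Module A (N l)] [∀ l, IsScalarTower R A (N l)] : Prop :=
  Nonempty (SplitQH R Aᵐᵒᵖ Λ (fun l => (N l →ₗ[R] R))) ∧
  (∀ l, Nonempty ((Δ l →ₗ[A] N l) ≃ₗ[R] R)) ∧
  (∀ l m, l ≠ m → ∀ f : Δ l →ₗ[A] N m, f = 0) ∧
  (∀ l m : Λ, ∀ i : ℕ, 0 < i → extVanish A (Δ l) (N m) i)

/-- A bundled family of costandard modules. -/
structure CostandardFamily (Δ : Λ → Type) [∀ l, AddCommGroup (Δ l)] [∀ l, Module R (Δ l)]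
    [∀ l, Module A (Δ l)] [∀ l, IsScalarTower R A (Δ l)] : Type 1 where
  Nab : Λ → Type
  [acg : ∀ l, AddCommGroup (Nab l)]
  [modR : ∀ l, Module R (Nab l)]
  [modA : ∀ l, Module A (Nab l)]
  [tower : ∀ l, IsScalarTower R A (Nab l)]
  cost : IsCostandard R A Λ Δ Nab

attribute [instance] CostandardFamily.acg CostandardFamily.modR CostandardFamily.modA
  CostandardFamily.tower

/-- `T` is a family of (partial) tilting modules forming a characteristic tilting module
`⊕ T(λ)`: each `T(λ)` admits an exact sequence `0 → Δ(λ) → T(λ) → X(λ) → 0` with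
`X(λ) ∈ F(Δ̃_{μ<λ})` and an exact sequence `0 → Y(λ) → T(λ) → ∇(λ) → 0` with
`Y(λ) ∈ F(∇̃_{μ<λ})`. -/
def IsCharTilting (Δ : Λ → Type) [∀ l, AddCommGroup (Δ l)] [∀ l, Module R (Δ l)]
    [∀ l, Module A (Δ l)] [∀ l, IsScalarTower R A (Δ l)]
    (N : Λ → Type) [∀ l, AddCommGroup (N l)] [∀ l, Module R (N l)]
    [∀ l, Module A (N l)] [∀ l, IsScalarTower R A (N l)]
    (T : Λ → Type) [∀ l, AddCommGroup (T l)] [∀ l, Module A (T l)] : Prop :=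
  ∀ l : Λ,
    (∃ f : Δ l →ₗ[A] T l, Function.Injective f ∧
      InFilt R A Λ Δ {m | m < l} ((T l) ⧸ LinearMap.range f)) ∧
    (∃ g : T l →ₗ[A] N l, Function.Surjective g ∧
      InFilt R A Λ N {m | m < l} ↥(LinearMap.ker g))

end Core

end

section LinearAlgebra

variable {A : Type} [Ring A]

lemma exists_comp_eq_of_ker_le {E F N : Type} [AddCommGroup E] [Module A E] [AddCommGroup F]
    [Module A F] [AddCommGroup N] [Module A N] (s : E →ₗ[A] F) (hs : Function.Surjective s)
    (φ : E →ₗ[A] N) (h : ∀ x, s x = 0 → φ x = 0) : ∃ ψ : F →ₗ[A] N, ∀ x, ψ (s x) = φ x := by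
  refine ⟨(LinearMap.ker s).liftQ φ (fun x hx => h x hx) ∘ₗ
    (s.quotKerEquivOfSurjective hs).symm.toLinearMap, fun x => ?_⟩
  have : (s.quotKerEquivOfSurjective hs).symm (s x) = Submodule.Quotient.mk x := by
    rw [LinearEquiv.symm_apply_eq]; rfl
  simp only [LinearMap.comp_apply, LinearEquiv.coe_coe, this]
  exact Submodule.liftQ_apply _ _ _

lemma exists_comp_eq_of_forall_mem_range {K E X : Type} [AddCommGroup E] [Module A E]
    [AddCommGroup K] [Module A K] [AddCommGroup X] [Module A X] (i : K →ₗ[A] E)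
    (hi : Function.Injective i) (φ : X →ₗ[A] E) (h : ∀ x, ∃ k, i k = φ x) :
    ∃ ψ : X →ₗ[A] K, ∀ x, i (ψ x) = φ x := by
  refine ⟨(LinearEquiv.ofInjective i hi).symm.toLinearMap ∘ₗ
    φ.codRestrict (LinearMap.range i) h, fun x => ?_⟩
  have := (LinearEquiv.ofInjective i hi).apply_symm_apply
    (φ.codRestrict (LinearMap.range i) h x)
  exact congrArg Subtype.val this

lemma exact_range_mkQ {M N : Type} [AddCommGroup M] [Module A M] [AddCommGroup N] [Module A N]
    (f : M →ₗ[A] N) : Function.Exact f (LinearMap.range f).mkQ := by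
  intro x; simp

lemma exact_subtype_ker {M N : Type} [AddCommGroup M] [Module A M] [AddCommGroup N] [Module A N]
    (f : M →ₗ[A] N) : Function.Exact (LinearMap.ker f).subtype f := by
  intro x; simp

lemma exact_subtype_mkQ {M : Type} [AddCommGroup M] [Module A M] (V : Submodule A M) :
    Function.Exact V.subtype V.mkQ := by
  intro x; simp

end LinearAlgebra

section ExtOne

variable {A : Type} [Ring A]

/-- `Ext¹_A(M, N) = 0`, phrased as an extension property: for every short exact sequence
`0 → K → E → M → 0`, every map `K → N` extends to `E`. -/
def ExtOneZero (A : Type) [Ring A] (M N : Type) [AddCommGroup M] [Module A M] [AddCommGroup N]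
    [Module A N] : Prop :=
  ∀ (K E : Type) [AddCommGroup K] [Module A K] [AddCommGroup E] [Module A E]
    (i : K →ₗ[A] E) (p : E →ₗ[A] M), Function.Injective i → Function.Surjective p →
    Function.Exact i p → ∀ φ : K →ₗ[A] N, ∃ ψ : E →ₗ[A] N, ∀ k, ψ (i k) = φ k

variable {M N : Type} [AddCommGroup M] [Module A M] [AddCommGroup N] [Module A N]

/-- `Ext¹_A(M, N) = 0` as a lifting property: maps out of `M` lift along surjections with
kernel `N`. -/
lemma ExtOneZero.lift (h : ExtOneZero A M N) {E B : Type} [AddCommGroup E] [Module A E]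
    [AddCommGroup B] [Module A B] (j : N →ₗ[A] E) (g : E →ₗ[A] B) (hj : Function.Injective j)
    (hg : Function.Surjective g) (hjg : Function.Exact j g) (φ : M →ₗ[A] B) :
    ∃ ψ : M →ₗ[A] E, ∀ m, g (ψ m) = φ m := by
  let Q : Submodule A (E × M) :=
    LinearMap.ker (g ∘ₗ LinearMap.fst A E M - φ ∘ₗ LinearMap.snd A E M)
  have hQ : ∀ x : E × M, x ∈ Q ↔ g x.1 = φ x.2 := fun x => by simp [Q, sub_eq_zero]
  let i : N →ₗ[A] Q := (LinearMap.inl A E M ∘ₗ j).codRestrict Q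
    (fun n => by rw [hQ]; simpa using hjg.apply_apply_eq_zero n)
  let p : Q →ₗ[A] M := LinearMap.snd A E M ∘ₗ Q.subtype
  have hi : Function.Injective i := fun a b hab => hj (by
    have := congrArg (fun x : Q => x.1.1) hab
    simpa [i] using this)
  have hp : Function.Surjective p := fun m => by
    obtain ⟨e, he⟩ := hg (φ m)
    exact ⟨⟨(e, m), (hQ _).2 he⟩, rfl⟩
  have hip : Function.Exact i p := by
    rintro ⟨⟨e, m⟩, hx⟩
    rw [hQ] at hx
    constructor
    · intro hm
      have hm : m = 0 := hm
      subst hm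
      obtain ⟨n, rfl⟩ := (hjg e).1 (by simpa using hx)
      exact ⟨n, rfl⟩
    · rintro ⟨n, hn⟩
      exact (congrArg (fun x : Q => x.1.2) hn).symm
  obtain ⟨r, hr⟩ := h N Q i p hi hp hip LinearMap.id
  obtain ⟨ψ, hψ⟩ := exists_comp_eq_of_ker_le p hp (LinearMap.fst A E M ∘ₗ Q.subtype - j ∘ₗ r)
    (fun x hx => by
      obtain ⟨n, rfl⟩ := (hip x).1 hx
      simp [hr, i])
  refine ⟨ψ, fun m => ?_⟩
  obtain ⟨x, rfl⟩ := hp m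
  rw [hψ]
  simpa [hjg.apply_apply_eq_zero, p] using (hQ x.1).1 x.2

lemma ExtOneZero.of_lift (h : ∀ (E B : Type) [AddCommGroup E] [Module A E]
    [AddCommGroup B] [Module A B] (j : N →ₗ[A] E) (g : E →ₗ[A] B), Function.Injective j →
    Function.Surjective g → Function.Exact j g → ∀ φ : M →ₗ[A] B,
    ∃ ψ : M →ₗ[A] E, ∀ m, g (ψ m) = φ m) : ExtOneZero A M N := by
  intro K E _ _ _ _ i p hi hp hip φ
  let D : Submodule A (N × E) := LinearMap.range (φ.prod (-i))
  have hD : ∀ k, (φ k, -i k) ∈ D := fun k => ⟨k, rfl⟩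
  let j : N →ₗ[A] (N × E) ⧸ D := D.mkQ ∘ₗ LinearMap.inl A N E
  let e : E →ₗ[A] (N × E) ⧸ D := D.mkQ ∘ₗ LinearMap.inr A N E
  let g : ((N × E) ⧸ D) →ₗ[A] M := D.liftQ (p ∘ₗ LinearMap.snd A N E) (by
    rintro _ ⟨k, rfl⟩
    simp [hip.apply_apply_eq_zero])
  have hej : ∀ k, e (i k) = j (φ k) := fun k => by
    symm
    refine (Submodule.Quotient.eq D).2 ?_
    simpa using hD k
  have hj : Function.Injective j := by
    rw [injective_iff_map_eq_zero]
    intro n hn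
    obtain ⟨k, hk⟩ := (Submodule.Quotient.mk_eq_zero D).1 hn
    have h2 : -i k = 0 := congrArg Prod.snd hk
    have h1 : φ k = n := congrArg Prod.fst hk
    have : k = 0 := hi (by simpa using h2)
    rw [← h1, this, map_zero]
  have hge : ∀ x, g (e x) = p x := fun x => by simp [g, e]
  have hg : Function.Surjective g := fun m => by
    obtain ⟨x, rfl⟩ := hp m
    exact ⟨e x, hge x⟩
  have hjg : Function.Exact j g := by
    intro x
    obtain ⟨⟨n, y⟩, rfl⟩ := D.mkQ_surjective x
    have hx : D.mkQ (n, y) = j n + e y := by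
      simp only [j, e, LinearMap.comp_apply, ← map_add]; simp
    have hgj : ∀ n, g (j n) = 0 := fun n => by simp [g, j]
    constructor
    · intro h0
      rw [hx, map_add, hgj, hge, zero_add] at h0
      obtain ⟨k, rfl⟩ := (hip y).1 h0
      exact ⟨n + φ k, by rw [hx, hej, map_add]⟩
    · rintro ⟨n', hn'⟩
      rw [← hn', hgj]
  obtain ⟨s, hs⟩ := h _ _ j g hj hg hjg LinearMap.id
  obtain ⟨ψ, hψ⟩ := exists_comp_eq_of_forall_mem_range j hj (e - s ∘ₗ p) (fun x =>
    (hjg _).1 (by simp [hge, hs]))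
  refine ⟨ψ, fun k => hj ?_⟩
  rw [hψ]
  simp [hej, hip.apply_apply_eq_zero]

lemma ExtOneZero.of_subsingleton_left [Subsingleton M] : ExtOneZero A M N :=
  .of_lift fun _ _ _ _ _ _ _ _ _ _ _ φ => ⟨0, fun m => by simp [Subsingleton.elim m 0]⟩

lemma ExtOneZero.of_subsingleton_right [Subsingleton N] : ExtOneZero A M N :=
  fun _ _ _ _ _ _ _ _ _ _ _ _ => ⟨0, fun _ => Subsingleton.elim _ _⟩

/-- Vanishing of `Ext¹` can be tested on a single projective presentation. -/
lemma ExtOneZero.of_presentation {K P : Type} [AddCommGroup K] [Module A K] [AddCommGroup P]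
    [Module A P] [Module.Projective A P] (i : K →ₗ[A] P) (p : P →ₗ[A] M)
    (hp : Function.Surjective p) (hip : Function.Exact i p)
    (h : ∀ φ : K →ₗ[A] N, ∃ ψ : P →ₗ[A] N, ∀ k, ψ (i k) = φ k) : ExtOneZero A M N := by
  intro K' E _ _ _ _ i' p' hi' hp' hip' φ
  obtain ⟨a, ha⟩ := Module.projective_lifting_property p' p hp'
  replace ha : ∀ x, p' (a x) = p x := fun x => LinearMap.congr_fun ha x
  obtain ⟨b, hb⟩ := exists_comp_eq_of_forall_mem_range i' hi' (a ∘ₗ i) (fun k =>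
    (hip' _).1 (by simp [ha, hip.apply_apply_eq_zero]))
  obtain ⟨ψ, hψ⟩ := h (φ ∘ₗ b)
  obtain ⟨χ, hχ⟩ := exists_comp_eq_of_ker_le (i'.coprod a)
    (fun e => by
      obtain ⟨x, hx⟩ := hp (p' e)
      obtain ⟨k, hk⟩ := (hip' (e - a x)).1 (by simp [ha, hx])
      exact ⟨(k, x), by simp [hk]⟩)
    (φ.coprod ψ) (by
      rintro ⟨k, x⟩ hkx
      simp only [LinearMap.coprod_apply] at hkx ⊢
      have hx : p x = 0 := by
        have := congrArg p' hkx
        simpa [ha, hip'.apply_apply_eq_zero] using this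
      obtain ⟨y, rfl⟩ := (hip x).1 hx
      have : k + b y = 0 := hi' (by simpa [hb] using hkx)
      rw [hψ, LinearMap.comp_apply, ← map_add, this, map_zero])
  exact ⟨χ, fun k => by simpa using hχ (k, 0)⟩

lemma ExtOneZero.of_exact_left {M' M'' : Type} [AddCommGroup M'] [Module A M'] [AddCommGroup M'']
    [Module A M''] (a : M' →ₗ[A] M) (b : M →ₗ[A] M'') (ha : Function.Injective a)
    (hb : Function.Surjective b) (hab : Function.Exact a b) (h' : ExtOneZero A M' N)
    (h'' : ExtOneZero A M'' N) : ExtOneZero A M N := by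
  intro K E _ _ _ _ i p hi hp hip φ
  let E' : Submodule A E := LinearMap.ker (b ∘ₗ p)
  obtain ⟨p', hp'⟩ := exists_comp_eq_of_forall_mem_range a ha (p ∘ₗ E'.subtype)
    (fun x => (hab _).1 x.2)
  let i' : K →ₗ[A] E' := i.codRestrict E' (fun k => by simp [E', hip.apply_apply_eq_zero])
  have hi' : Function.Injective i' := fun x y hxy => hi (congrArg Subtype.val hxy)
  have hsp' : Function.Surjective p' := fun m => by
    obtain ⟨x, hx⟩ := hp (a m)
    exact ⟨⟨x, by simp [E', hx, hab.apply_apply_eq_zero]⟩, ha (by simp [hp', hx])⟩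
  have hip' : Function.Exact i' p' := by
    intro x
    constructor
    · intro hx
      obtain ⟨k, hk⟩ := (hip x.1).1 (by have := hp' x; rw [hx] at this; simpa using this.symm)
      exact ⟨k, Subtype.ext hk⟩
    · rintro ⟨k, rfl⟩
      exact ha (by rw [hp']; simp [i', hip.apply_apply_eq_zero])
  obtain ⟨ψ', hψ'⟩ := h' K E' i' p' hi' hsp' hip' φ
  obtain ⟨ψ, hψ⟩ := h'' E' E E'.subtype (b ∘ₗ p) E'.subtype_injective (hb.comp hp)
    (exact_subtype_ker _) ψ'
  exact ⟨ψ, fun k => by rw [← hψ' k]; exact hψ (i' k)⟩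

lemma ExtOneZero.of_exact_right {N' N'' : Type} [AddCommGroup N'] [Module A N'] [AddCommGroup N'']
    [Module A N''] (a : N' →ₗ[A] N) (b : N →ₗ[A] N'') (ha : Function.Injective a)
    (hb : Function.Surjective b) (hab : Function.Exact a b) (h' : ExtOneZero A M N')
    (h'' : ExtOneZero A M N'') : ExtOneZero A M N := by
  refine .of_lift fun E B _ _ _ _ j g hj hg hjg φ => ?_
  let V := LinearMap.range (j ∘ₗ a)
  obtain ⟨j', hj'⟩ := exists_comp_eq_of_ker_le b hb (V.mkQ ∘ₗ j) (fun x hx => by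
    obtain ⟨y, rfl⟩ := (hab x).1 hx
    simp [V])
  let g' : (E ⧸ V) →ₗ[A] B := V.liftQ g (by
    rintro _ ⟨x, rfl⟩
    simp [hjg.apply_apply_eq_zero])
  have hg' : Function.Surjective g' := fun y => by
    obtain ⟨x, rfl⟩ := hg y
    exact ⟨V.mkQ x, by simp [g']⟩
  have hij' : Function.Injective j' := by
    rw [injective_iff_map_eq_zero]
    intro x hx
    obtain ⟨y, rfl⟩ := hb x
    rw [hj'] at hx
    obtain ⟨z, hz⟩ := (Submodule.Quotient.mk_eq_zero V).1 hx
    rw [← hj hz]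
    exact hab.apply_apply_eq_zero z
  have hjg' : Function.Exact j' g' := by
    intro x
    obtain ⟨x, rfl⟩ := V.mkQ_surjective x
    constructor
    · intro hx
      obtain ⟨n, rfl⟩ := (hjg x).1 (by simpa [g'] using hx)
      exact ⟨b n, hj' n⟩
    · rintro ⟨n, hn⟩
      obtain ⟨n, rfl⟩ := hb n
      rw [← hn, hj']
      simp [g', hjg.apply_apply_eq_zero]
  obtain ⟨ψ', hψ'⟩ := h''.lift j' g' hij' hg' hjg' φ
  obtain ⟨ψ, hψ⟩ := h'.lift (j ∘ₗ a) V.mkQ (hj.comp ha) V.mkQ_surjective (exact_range_mkQ _) ψ'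
  refine ⟨ψ, fun m => ?_⟩
  rw [← hψ' m, ← hψ m]
  simp [g']

end ExtOne

section ExtComparison

variable {A : Type} [Ring A]

lemma ExtOneZero.of_extVanish {M N : Type} [AddCommGroup M] [Module A M] [AddCommGroup N]
    [Module A N] (h : extVanish A M N 1) : ExtOneZero A M N := by
  let P := projectiveResolution (ModuleCat.of A M)
  have h0 : Limits.IsZero ((P.complex.linearYonedaObj ℤ (ModuleCat.of A N)).homology 1) := by
    refine Limits.IsZero.of_iso ?_ (P.isoExt (R := ℤ) 1 (ModuleCat.of A N)).symm
    exact @ModuleCat.isZero_of_subsingleton _ _ _ h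
  rw [← HomologicalComplex.exactAt_iff_isZero_homology,
    HomologicalComplex.exactAt_iff' _ 0 1 2 (by simp) (by simp),
    ShortComplex.moduleCat_exact_iff] at h0
  have hex := (ShortComplex.moduleCat_exact_iff _).1 P.exact₀
  have hepi : Function.Surjective (P.π.f 0) := (ModuleCat.epi_iff_surjective _).1 inferInstance
  have : Module.Projective A (P.complex.X 0) :=
    (IsProjective.iff_projective _).2 (P.projective 0)
  let p : (P.complex.X 0 : Type) →ₗ[A] M := (P.π.f 0).hom
  let d : (P.complex.X 1 : Type) →ₗ[A] P.complex.X 0 := (P.complex.d 1 0).hom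
  have hpd : ∀ x, p (d x) = 0 := fun x =>
    congrArg (fun f => f.hom x) P.complex_d_comp_π_f_zero
  have hdd : ∀ x, d ((P.complex.d 2 1).hom x) = 0 := fun x =>
    congrArg (fun f => f.hom x) (P.complex.d_comp_d 2 1 0)
  let d' : (P.complex.X 1 : Type) →ₗ[A] LinearMap.ker p := d.codRestrict _ hpd
  refine .of_presentation (LinearMap.ker p).subtype p hepi (exact_subtype_ker p) fun φ => ?_
  obtain ⟨ψ, hψ⟩ := h0 (ModuleCat.ofHom (φ ∘ₗ d') : P.complex.X 1 ⟶ ModuleCat.of A N) (by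
    show P.complex.d 2 1 ≫ (ModuleCat.ofHom (φ ∘ₗ d') : P.complex.X 1 ⟶ ModuleCat.of A N) = 0
    ext x
    have : d' ((P.complex.d 2 1).hom x) = 0 := Subtype.ext (hdd x)
    show φ (d' ((P.complex.d 2 1).hom x)) = 0
    rw [this, map_zero])
  change P.complex.X 0 ⟶ ModuleCat.of A N at ψ
  replace hψ : P.complex.d 1 0 ≫ ψ = ModuleCat.ofHom (φ ∘ₗ d') := hψ
  refine ⟨ψ.hom, fun k => ?_⟩
  obtain ⟨x, hx⟩ := hex k.1 k.2
  replace hx : d x = k.1 := hx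
  have h1 : ψ.hom (d x) = φ (d' x) := congrArg (fun f => f.hom x) hψ
  have h2 : d' x = k := Subtype.ext hx
  rw [← h2, ← h1]
  rfl

end ExtComparison

section AddClosure

variable {A : Type} [Ring A]

/-- `Z` is a direct summand of a finite direct sum of copies of `D`, expressed through a
finite dual basis. -/
def AddOf (A : Type) [Ring A] (D Z : Type) [AddCommGroup D] [Module A D] [AddCommGroup Z]
    [Module A Z] : Prop :=
  ∃ (ι : Type) (_ : Fintype ι) (i : ι → D →ₗ[A] Z) (p : ι → Z →ₗ[A] D),
    ∀ z, ∑ k, i k (p k z) = z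

variable {D Z M N : Type} [AddCommGroup D] [Module A D] [AddCommGroup Z] [Module A Z]
  [AddCommGroup M] [Module A M] [AddCommGroup N] [Module A N]

lemma AddOf.refl : AddOf A D D :=
  ⟨Unit, inferInstance, fun _ => LinearMap.id, fun _ => LinearMap.id, fun z => by simp⟩

/-- If the identity of `Z` factors through finitely many modules in `add D`, then `Z` is in
`add D`. -/
lemma AddOf.of_sum_eq {κ : Type} [Fintype κ] {X : κ → Type} [∀ j, AddCommGroup (X j)]
    [∀ j, Module A (X j)] (h : ∀ j, AddOf A D (X j)) (i : ∀ j, X j →ₗ[A] Z)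
    (p : ∀ j, Z →ₗ[A] X j) (hip : ∀ z, ∑ j, i j (p j z) = z) : AddOf A D Z := by
  choose ι hι a b hab using h
  refine ⟨Σ j, ι j, inferInstance, fun x => i x.1 ∘ₗ a x.1 x.2, fun x => b x.1 x.2 ∘ₗ p x.1,
    fun z => ?_⟩
  rw [Fintype.sum_sigma]
  conv_rhs => rw [← hip z]
  refine Finset.sum_congr rfl fun j _ => ?_
  conv_rhs => rw [← hab j (p j z), map_sum]
  rfl

lemma AddOf.equiv {Z' : Type} [AddCommGroup Z'] [Module A Z'] (h : AddOf A D Z)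
    (e : Z ≃ₗ[A] Z') : AddOf A D Z' :=
  .of_sum_eq (κ := Unit) (fun _ => h) (fun _ => e.toLinearMap) (fun _ => e.symm.toLinearMap)
    (fun z => by simp)

lemma AddOf.extOneZero_left (h : AddOf A D Z) (hD : ExtOneZero A D N) : ExtOneZero A Z N := by
  obtain ⟨ι, _, i, p, hip⟩ := h
  refine .of_lift fun E B _ _ _ _ j g hj hg hjg φ => ?_
  choose ψ hψ using fun k => hD.lift j g hj hg hjg (φ ∘ₗ i k)
  refine ⟨∑ k, ψ k ∘ₗ p k, fun m => ?_⟩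
  simp only [LinearMap.sum_apply, LinearMap.comp_apply, map_sum, hψ]
  rw [← map_sum, hip]

lemma AddOf.extOneZero_right (h : AddOf A D Z) (hD : ExtOneZero A M D) : ExtOneZero A M Z := by
  obtain ⟨ι, _, i, p, hip⟩ := h
  intro K E _ _ _ _ j g hj hg hjg φ
  choose ψ hψ using fun k => hD K E j g hj hg hjg (p k ∘ₗ φ)
  exact ⟨∑ k, i k ∘ₗ ψ k, fun m => by simp [hψ, hip]⟩

lemma AddOf.hom_eq_zero_left (h : AddOf A D Z) (hD : ∀ f : D →ₗ[A] N, f = 0) (f : Z →ₗ[A] N) :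
    f = 0 := by
  obtain ⟨ι, _, i, p, hip⟩ := h
  ext z
  rw [← hip z, map_sum]
  exact Finset.sum_eq_zero fun k _ => LinearMap.congr_fun (hD (f ∘ₗ i k)) (p k z)

lemma AddOf.hom_eq_zero_right (h : AddOf A D Z) (hD : ∀ f : M →ₗ[A] D, f = 0) (f : M →ₗ[A] Z) :
    f = 0 := by
  obtain ⟨ι, _, i, p, hip⟩ := h
  ext m
  rw [← hip (f m)]
  exact Finset.sum_eq_zero fun k _ => by
    rw [show p k (f m) = 0 from LinearMap.congr_fun (hD (p k ∘ₗ f)) m, map_zero]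

/-- `add D` is closed under extensions when `Ext¹(D, D) = 0`. -/
lemma AddOf.of_exact (hD : ExtOneZero A D D) (a : M →ₗ[A] Z) (b : Z →ₗ[A] N)
    (ha : Function.Injective a) (hb : Function.Surjective b) (hab : Function.Exact a b)
    (hM : AddOf A D M) (hN : AddOf A D N) : AddOf A D Z := by
  obtain ⟨s, hs⟩ := (hN.extOneZero_left (hM.extOneZero_right hD)).lift a b ha hb hab LinearMap.id
  obtain ⟨r, hr⟩ := exists_comp_eq_of_forall_mem_range a ha (LinearMap.id - s ∘ₗ b) (fun x =>
    (hab _).1 (by simp [hs]))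
  obtain ⟨ι, _, i, p, hip⟩ := hM
  obtain ⟨ι', _, i', p', hip'⟩ := hN
  refine ⟨ι ⊕ ι', inferInstance, Sum.elim (fun k => a ∘ₗ i k) (fun k => s ∘ₗ i' k),
    Sum.elim (fun k => p k ∘ₗ r) (fun k => p' k ∘ₗ b), fun z => ?_⟩
  simp [← map_sum, hip, hip', hr]

end AddClosure

section Filtrations

variable {A : Type} [Ring A]

/-- Iterated extensions of modules satisfying `Q`. -/
inductive Filt (A : Type) [Ring A] (Q : ∀ (Z : Type) [AddCommGroup Z] [Module A Z], Prop) :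
    ∀ (X : Type) [AddCommGroup X] [Module A X], Prop
  | zero (X : Type) [AddCommGroup X] [Module A X] [Subsingleton X] : Filt A Q X
  | step (Y X Z : Type) [AddCommGroup Y] [Module A Y] [AddCommGroup X] [Module A X]
      [AddCommGroup Z] [Module A Z] (i : Y →ₗ[A] X) (p : X →ₗ[A] Z)
      (hi : Function.Injective i) (hp : Function.Surjective p) (hip : Function.Exact i p)
      (hY : Filt A Q Y) (hZ : Q Z) : Filt A Q X

variable {Q : ∀ (Z : Type) [AddCommGroup Z] [Module A Z], Prop}

lemma Filt.of_factor {X : Type} [AddCommGroup X] [Module A X] (h : Q X) : Filt A Q X :=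
  .step PUnit X X 0 LinearMap.id (fun _ _ _ => rfl) Function.surjective_id
    (fun x => by simp [eq_comm]) (.zero _) h

lemma Filt.equiv {X X' : Type} [AddCommGroup X] [Module A X] [AddCommGroup X'] [Module A X']
    (h : Filt A Q X) (e : X ≃ₗ[A] X') : Filt A Q X' := by
  cases h with
  | zero =>
    have : Subsingleton X' := e.symm.injective.subsingleton
    exact .zero _
  | step Y _ Z i p hi hp hip hY hZ =>
    refine .step Y X' Z (e.toLinearMap ∘ₗ i) (p ∘ₗ e.symm.toLinearMap) (e.injective.comp hi)
      (hp.comp e.symm.surjective) (fun x => ?_) hY hZ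
    have := hip (e.symm x)
    simp only [LinearMap.comp_apply, LinearEquiv.coe_coe, this, Set.mem_range,
      LinearEquiv.eq_symm_apply]

lemma Filt.mono {Q' : ∀ (Z : Type) [AddCommGroup Z] [Module A Z], Prop}
    (hQ : ∀ (Z : Type) [AddCommGroup Z] [Module A Z], Q Z → Q' Z) {X : Type} [AddCommGroup X]
    [Module A X] (h : Filt A Q X) : Filt A Q' X := by
  induction h with
  | zero => exact .zero _
  | step Y X Z i p hi hp hip _ hZ ih => exact .step Y X Z i p hi hp hip ih (hQ Z hZ)

lemma Filt.of_exact {X Y Z : Type} [AddCommGroup X] [Module A X] [AddCommGroup Y] [Module A Y]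
    [AddCommGroup Z] [Module A Z] (i : Y →ₗ[A] X) (p : X →ₗ[A] Z) (hi : Function.Injective i)
    (hp : Function.Surjective p) (hip : Function.Exact i p) (hY : Filt A Q Y)
    (hZ : Filt A Q Z) : Filt A Q X := by
  induction hZ generalizing X with
  | zero Z =>
    refine hY.equiv (LinearEquiv.ofBijective i ⟨hi, fun x => ?_⟩)
    exact (hip x).1 (Subsingleton.elim _ _)
  | step Z' Z W j q hj hq hjq _ hW ih =>
    let X' : Submodule A X := LinearMap.ker (q ∘ₗ p)
    obtain ⟨p', hp'⟩ := exists_comp_eq_of_forall_mem_range j hj (p ∘ₗ X'.subtype)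
      (fun x => (hjq _).1 x.2)
    let i' : Y →ₗ[A] X' := i.codRestrict X' (fun y => by simp [X', hip.apply_apply_eq_zero])
    refine .step X' X W X'.subtype (q ∘ₗ p) X'.subtype_injective (hq.comp hp)
      (exact_subtype_ker _) (ih i' p' (fun x y hxy => hi (congrArg Subtype.val hxy)) ?_ ?_) hW
    · intro z
      obtain ⟨x, hx⟩ := hp (j z)
      exact ⟨⟨x, by simp [X', hx, hjq.apply_apply_eq_zero]⟩, hj (by simp [hp', hx])⟩
    · intro x
      constructor
      · intro hx
        obtain ⟨k, hk⟩ := (hip x.1).1 (by have := hp' x; rw [hx] at this; simpa using this.symm)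
        exact ⟨k, Subtype.ext hk⟩
      · rintro ⟨k, rfl⟩
        exact hj (by rw [hp']; simp [i', hip.apply_apply_eq_zero])

lemma Filt.pi_fin {D : Type} [AddCommGroup D] [Module A D] (h : Q D) (n : ℕ) :
    Filt A Q (Fin n → D) := by
  induction n with
  | zero => exact .zero _
  | succ n ih =>
    refine Filt.equiv (Filt.of_exact (LinearMap.inr A D (Fin n → D))
      (LinearMap.fst A D (Fin n → D)) LinearMap.inr_injective LinearMap.fst_surjective ?_ ih
      (.of_factor h)) (Fin.consLinearEquiv A (fun _ => D))
    rintro ⟨x, y⟩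
    simp [eq_comm]

lemma Filt.extOneZero_left {X N : Type} [AddCommGroup X] [Module A X] [AddCommGroup N]
    [Module A N] (h : Filt A Q X)
    (hQ : ∀ (Z : Type) [AddCommGroup Z] [Module A Z], Q Z → ExtOneZero A Z N) :
    ExtOneZero A X N := by
  induction h with
  | zero => exact .of_subsingleton_left
  | step Y X Z i p hi hp hip _ hZ ih => exact .of_exact_left i p hi hp hip ih (hQ Z hZ)

lemma Filt.extOneZero_right {X M : Type} [AddCommGroup X] [Module A X] [AddCommGroup M]
    [Module A M] (h : Filt A Q X)
    (hQ : ∀ (Z : Type) [AddCommGroup Z] [Module A Z], Q Z → ExtOneZero A M Z) :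
    ExtOneZero A M X := by
  induction h with
  | zero => exact .of_subsingleton_right
  | step Y X Z i p hi hp hip _ hZ ih => exact .of_exact_right i p hi hp hip ih (hQ Z hZ)

lemma Filt.hom_eq_zero_left {X N : Type} [AddCommGroup X] [Module A X] [AddCommGroup N]
    [Module A N] (h : Filt A Q X)
    (hQ : ∀ (Z : Type) [AddCommGroup Z] [Module A Z], Q Z → ∀ f : Z →ₗ[A] N, f = 0)
    (f : X →ₗ[A] N) : f = 0 := by
  induction h with
  | zero => ext x; simp [Subsingleton.elim x 0]
  | step Y X Z i p hi hp hip _ hZ ih =>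
    obtain ⟨g, hg⟩ := exists_comp_eq_of_ker_le p hp f (fun x hx => by
      obtain ⟨y, rfl⟩ := (hip x).1 hx
      exact LinearMap.congr_fun (ih (f ∘ₗ i)) y)
    ext x
    rw [← hg, hQ Z hZ g]
    simp

lemma Filt.hom_eq_zero_right {X M : Type} [AddCommGroup X] [Module A X] [AddCommGroup M]
    [Module A M] (h : Filt A Q X)
    (hQ : ∀ (Z : Type) [AddCommGroup Z] [Module A Z], Q Z → ∀ f : M →ₗ[A] Z, f = 0)
    (f : M →ₗ[A] X) : f = 0 := by
  induction h with
  | zero => ext x; exact Subsingleton.elim _ _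
  | step Y X Z i p hi hp hip _ hZ ih =>
    obtain ⟨g, hg⟩ := exists_comp_eq_of_forall_mem_range i hi f (fun x =>
      (hip _).1 (LinearMap.congr_fun (hQ Z hZ (p ∘ₗ f)) x))
    ext x
    rw [← hg, ih g]
    simp

/-- The subquotient of two submodules satisfies `Q`. -/
def SubquotSat (Q : ∀ (Z : Type) [AddCommGroup Z] [Module A Z], Prop) {X : Type} [AddCommGroup X]
    [Module A X] (V W : Submodule A X) : Prop :=
  Q (↥W ⧸ Submodule.comap W.subtype V)

lemma Filt.of_chain {X : Type} [AddCommGroup X] [Module A X] (n : ℕ)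
    (c : Fin (n + 1) → Submodule A X) (h0 : c 0 = ⊥) (h1 : c (Fin.last n) = ⊤)
    (hc : Monotone c) (hQ : ∀ i : Fin n, SubquotSat Q (c i.castSucc) (c i.succ)) :
    Filt A Q X := by
  have key : ∀ k, Filt A Q (c k) := by
    intro k
    induction k using Fin.induction with
    | zero =>
      rw [h0]
      exact .zero _
    | succ k ih =>
      have hle : c k.castSucc ≤ c k.succ := hc (Fin.castSucc_lt_succ).le
      refine .step _ _ _ (Submodule.inclusion hle) (Submodule.mkQ _)
        (Submodule.inclusion_injective hle) (Submodule.mkQ_surjective _) (fun x => ?_) ih (hQ k)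
      simp only [Submodule.mkQ_apply, Submodule.Quotient.mk_eq_zero, Submodule.mem_comap,
        Submodule.subtype_apply, Set.mem_range]
      exact ⟨fun hx => ⟨⟨x, hx⟩, rfl⟩, by rintro ⟨y, rfl⟩; exact y.2⟩
  have := key (Fin.last n)
  rw [h1] at this
  exact this.equiv Submodule.topEquiv

lemma Filt.exists_chain {X : Type} [AddCommGroup X] [Module A X] (h : Filt A Q X)
    (hQ : ∀ (Z Z' : Type) [AddCommGroup Z] [Module A Z] [AddCommGroup Z'] [Module A Z'],
      (Z ≃ₗ[A] Z') → Q Z → Q Z') :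
    ∃ (n : ℕ) (c : Fin (n + 1) → Submodule A X), c 0 = ⊥ ∧ c (Fin.last n) = ⊤ ∧ Monotone c ∧
      ∀ i : Fin n, SubquotSat Q (c i.castSucc) (c i.succ) := by
  suffices key : ∀ (E : Type) [AddCommGroup E] [Module A E] (j : X →ₗ[A] E),
      Function.Injective j → ∃ (n : ℕ) (c : Fin (n + 1) → Submodule A E), c 0 = ⊥ ∧
        c (Fin.last n) = LinearMap.range j ∧ Monotone c ∧
        ∀ i : Fin n, SubquotSat Q (c i.castSucc) (c i.succ) by
    simpa using key X LinearMap.id Function.injective_id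
  induction h with
  | zero X =>
    intro E _ _ j hj
    refine ⟨0, fun _ => ⊥, rfl, ?_, monotone_const, fun i => i.elim0⟩
    symm
    rw [eq_bot_iff]
    rintro _ ⟨x, rfl⟩
    simp [Subsingleton.elim x 0]
  | step Y X Z i p hi hp hip _ hZ ih =>
    intro E _ _ j hj
    obtain ⟨n, c, h0, h1, hm, hs⟩ := ih E (j ∘ₗ i) (hj.comp hi)
    have hle : c (Fin.last n) ≤ LinearMap.range j := by
      rw [h1]
      exact LinearMap.range_comp_le_range i j
    refine ⟨n + 1, Fin.snoc (α := fun _ => Submodule A E) c (LinearMap.range j), ?_, ?_, ?_, ?_⟩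
    · rw [← h0, ← Fin.castSucc_zero, Fin.snoc_castSucc]
    · rw [Fin.snoc_last]
    · rw [Fin.monotone_iff_le_succ]
      intro k
      induction k using Fin.lastCases with
      | last => rw [Fin.succ_last, Fin.snoc_last, Fin.snoc_castSucc]; exact hle
      | cast k =>
        rw [Fin.snoc_castSucc, Fin.succ_castSucc, Fin.snoc_castSucc]
        exact hm (Fin.castSucc_lt_succ).le
    · intro k
      induction k using Fin.lastCases with
      | cast k =>
        rw [Fin.snoc_castSucc, Fin.succ_castSucc, Fin.snoc_castSucc]
        exact hs k
      | last =>
        rw [Fin.succ_last, Fin.snoc_last, Fin.snoc_castSucc, h1]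
        let e := LinearEquiv.ofInjective j hj
        let q : LinearMap.range j →ₗ[A] Z := p ∘ₗ e.symm.toLinearMap
        have hq : Function.Surjective q := hp.comp e.symm.surjective
        have hk : LinearMap.ker q =
            Submodule.comap (LinearMap.range j).subtype (LinearMap.range (j ∘ₗ i)) := by
          ext x
          obtain ⟨x, rfl⟩ := e.surjective x
          have : q (e x) = p x := by simp [q]
          rw [LinearMap.mem_ker, this, hip x]
          constructor
          · rintro ⟨y, rfl⟩
            exact ⟨y, rfl⟩
          · rintro ⟨y, hy⟩
            exact ⟨y, hj hy⟩
        exact hQ _ _ ((Submodule.quotEquivOfEq _ _ hk.symm).trans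
          (q.quotKerEquivOfSurjective hq)).symm hZ

end Filtrations

section StandardFiltrations

variable {A : Type} [Ring A] {Λ : Type} {D : Λ → Type} [∀ l, AddCommGroup (D l)]
  [∀ l, Module A (D l)]

/-- `Z` lies in `add D(λ)` for some `λ ∈ S`. -/
def AddFactor (A : Type) [Ring A] {Λ : Type} (D : Λ → Type) [∀ l, AddCommGroup (D l)]
    [∀ l, Module A (D l)] (S : Set Λ) (Z : Type) [AddCommGroup Z] [Module A Z] : Prop :=
  ∃ l ∈ S, AddOf A (D l) Z

lemma Filt.mono_addFactor {S S' : Set Λ} (hS : S ⊆ S') {X : Type} [AddCommGroup X] [Module A X]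
    (h : Filt A (AddFactor A D S) X) : Filt A (AddFactor A D S') X :=
  h.mono fun _ _ _ ⟨l, hl, hZ⟩ => ⟨l, hS hl, hZ⟩

lemma Filt.addFactor_extOneZero_left {S : Set Λ} {X N : Type} [AddCommGroup X] [Module A X]
    [AddCommGroup N] [Module A N] (h : Filt A (AddFactor A D S) X)
    (hD : ∀ l ∈ S, ExtOneZero A (D l) N) : ExtOneZero A X N :=
  h.extOneZero_left fun _ _ _ ⟨l, hl, hZ⟩ => hZ.extOneZero_left (hD l hl)

lemma Filt.addFactor_extOneZero_right {S : Set Λ} {X M : Type} [AddCommGroup X] [Module A X]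
    [AddCommGroup M] [Module A M] (h : Filt A (AddFactor A D S) X)
    (hD : ∀ l ∈ S, ExtOneZero A M (D l)) : ExtOneZero A M X :=
  h.extOneZero_right fun _ _ _ ⟨l, hl, hZ⟩ => hZ.extOneZero_right (hD l hl)

lemma Filt.addFactor_hom_eq_zero_left {S : Set Λ} {X N : Type} [AddCommGroup X] [Module A X]
    [AddCommGroup N] [Module A N] (h : Filt A (AddFactor A D S) X)
    (hD : ∀ l ∈ S, ∀ f : D l →ₗ[A] N, f = 0) (f : X →ₗ[A] N) : f = 0 :=
  h.hom_eq_zero_left (fun _ _ _ ⟨l, hl, hZ⟩ => hZ.hom_eq_zero_left (hD l hl)) f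

lemma Filt.addFactor_hom_eq_zero_right {S : Set Λ} {X M : Type} [AddCommGroup X] [Module A X]
    [AddCommGroup M] [Module A M] (h : Filt A (AddFactor A D S) X)
    (hD : ∀ l ∈ S, ∀ f : M →ₗ[A] D l, f = 0) (f : M →ₗ[A] X) : f = 0 :=
  h.hom_eq_zero_right (fun _ _ _ ⟨l, hl, hZ⟩ => hZ.hom_eq_zero_right (hD l hl)) f

section QuotientSequence

variable {X Y Z : Type} [AddCommGroup X] [Module A X] [AddCommGroup Y] [Module A Y]
  [AddCommGroup Z] [Module A Z]

/-- A short exact sequence `0 → Y → X → Z → 0` and `V ≤ Y` give a short exact sequence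
`0 → Y / V → X / V → Z → 0`. -/
lemma exists_quotient_exact (i : Y →ₗ[A] X) (p : X →ₗ[A] Z) (hi : Function.Injective i)
    (hp : Function.Surjective p) (hip : Function.Exact i p) (V : Submodule A Y) :
    ∃ (a : (Y ⧸ V) →ₗ[A] X ⧸ V.map i) (b : (X ⧸ V.map i) →ₗ[A] Z),
      Function.Injective a ∧ Function.Surjective b ∧ Function.Exact a b ∧
      (∀ y, a (V.mkQ y) = (V.map i).mkQ (i y)) ∧ ∀ x, b ((V.map i).mkQ x) = p x := by
  have hb : V.map i ≤ LinearMap.ker p := by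
    rintro _ ⟨y, _, rfl⟩
    exact hip.apply_apply_eq_zero y
  refine ⟨V.mapQ (V.map i) i (Submodule.le_comap_map i V), (V.map i).liftQ p hb, ?_, ?_, ?_,
    fun y => rfl, fun x => rfl⟩
  · rw [injective_iff_map_eq_zero]
    intro y hy
    obtain ⟨y, rfl⟩ := V.mkQ_surjective y
    obtain ⟨y', hy', hyy⟩ := (Submodule.Quotient.mk_eq_zero (V.map i)).1 hy
    rw [← hi hyy]
    simpa using hy'
  · intro z
    obtain ⟨x, rfl⟩ := hp z
    exact ⟨(V.map i).mkQ x, rfl⟩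
  · intro x
    obtain ⟨x, rfl⟩ := (V.map i).mkQ_surjective x
    constructor
    · intro hx
      obtain ⟨y, rfl⟩ := (hip x).1 hx
      exact ⟨V.mkQ y, rfl⟩
    · rintro ⟨y, hy⟩
      obtain ⟨y, rfl⟩ := V.mkQ_surjective y
      rw [← hy]
      exact hip.apply_apply_eq_zero y

/-- If moreover `X / V → Z` splits, then `V` extends to `W ≤ X` which is an extension of `Z` by
`V` and satisfies `X / W ≃ Y / V`. -/
lemma exists_submodule_of_split (i : Y →ₗ[A] X) (p : X →ₗ[A] Z) (hi : Function.Injective i)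
    (hp : Function.Surjective p) (hip : Function.Exact i p) (V : Submodule A Y)
    (h : ExtOneZero A Z (Y ⧸ V)) :
    ∃ (W : Submodule A X) (a : V →ₗ[A] W) (b : W →ₗ[A] Z), Function.Injective a ∧
      Function.Surjective b ∧ Function.Exact a b ∧ Nonempty ((Y ⧸ V) ≃ₗ[A] X ⧸ W) := by
  obtain ⟨a, b, ha, hb, hab, haV, hbV⟩ := exists_quotient_exact i p hi hp hip V
  obtain ⟨s, hs⟩ := h.lift a b ha hb hab LinearMap.id
  let W : Submodule A X := (LinearMap.range s).comap (V.map i).mkQ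
  have hVW : ∀ y ∈ V, i y ∈ W := fun y hy => by
    have : (V.map i).mkQ (i y) = 0 := by
      simpa using ⟨y, hy, rfl⟩
    show (V.map i).mkQ (i y) ∈ LinearMap.range s
    rw [this]
    exact zero_mem _
  have hWV : ∀ x ∈ W, p x = 0 → ∃ y ∈ V, i y = x := fun x hx hpx => by
    obtain ⟨z, hz⟩ := hx
    have hz0 : z = 0 := by
      have := hs z
      rw [hz, hbV, hpx] at this
      exact this.symm
    rw [hz0, map_zero] at hz
    exact (Submodule.Quotient.mk_eq_zero (V.map i)).1 hz.symm
  refine ⟨W, (i ∘ₗ V.subtype).codRestrict W (fun y => hVW y.1 y.2), p ∘ₗ W.subtype,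
    fun x y hxy => Subtype.ext (hi (congrArg Subtype.val hxy)), fun z => ?_, fun x => ?_, ?_⟩
  · obtain ⟨x, hx⟩ := (V.map i).mkQ_surjective (s z)
    refine ⟨⟨x, z, hx.symm⟩, ?_⟩
    rw [LinearMap.comp_apply, Submodule.subtype_apply, ← hbV, hx, hs]
    rfl
  · constructor
    · intro hx
      obtain ⟨y, hy, hyx⟩ := hWV x.1 x.2 hx
      exact ⟨⟨y, hy⟩, Subtype.ext hyx⟩
    · rintro ⟨y, rfl⟩
      exact hip.apply_apply_eq_zero y.1
  · let q : Y →ₗ[A] X ⧸ W := W.mkQ ∘ₗ i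
    have hq : Function.Surjective q := fun x => by
      obtain ⟨x, rfl⟩ := W.mkQ_surjective x
      obtain ⟨y, hy⟩ := (hab ((V.map i).mkQ x - s (p x))).1 (by simp [← hbV, hs])
      obtain ⟨y, rfl⟩ := V.mkQ_surjective y
      refine ⟨y, ((Submodule.Quotient.eq W).2 ?_).symm⟩
      refine ⟨p x, ?_⟩
      rw [map_sub, ← haV, hy]
      abel
    have hk : V = LinearMap.ker q := by
      ext y
      rw [LinearMap.mem_ker]
      constructor
      · intro hy
        exact (Submodule.Quotient.mk_eq_zero W).2 (hVW y hy)
      · intro hy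
        obtain ⟨y', hy', hyy⟩ := hWV (i y) ((Submodule.Quotient.mk_eq_zero W).1 hy)
          (hip.apply_apply_eq_zero y)
        rwa [← hi hyy]
    exact ⟨(Submodule.quotEquivOfEq _ _ hk).trans (q.quotKerEquivOfSurjective hq)⟩

end QuotientSequence

variable [PartialOrder Λ]

/-- A minimal index of a standard filtration can be moved to the top. -/
lemma Filt.exists_submodule_of_minimal (hExt : ∀ l m : Λ, ¬ l < m → ExtOneZero A (D l) (D m))
    {S : Set Λ} {μ : Λ} (hμ : ∀ ν ∈ S, ¬ ν < μ) {X : Type} [AddCommGroup X] [Module A X]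
    (h : Filt A (AddFactor A D S) X) :
    ∃ V : Submodule A X, Filt A (AddFactor A D (S \ {μ})) V ∧ AddOf A (D μ) (X ⧸ V) := by
  induction h with
  | zero X =>
    refine ⟨⊥, .zero _, PEmpty, inferInstance, fun k => k.elim, fun k => k.elim, fun z => ?_⟩
    obtain ⟨z, rfl⟩ := Submodule.mkQ_surjective _ z
    simp [Subsingleton.elim z 0]
  | step Y X Z i p hi hp hip _ hZ ih =>
    obtain ⟨V, hV, hYV⟩ := ih
    obtain ⟨ν, hν, hZ⟩ := hZ
    by_cases hνμ : ν = μ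
    · subst hνμ
      obtain ⟨a, b, ha, hb, hab, -, -⟩ := exists_quotient_exact i p hi hp hip V
      exact ⟨V.map i, hV.equiv (Submodule.equivMapOfInjective i hi V),
        .of_exact (hExt ν ν (lt_irrefl ν)) a b ha hb hab hYV hZ⟩
    · obtain ⟨W, a, b, ha, hb, hab, ⟨e⟩⟩ := exists_submodule_of_split i p hi hp hip V
        (hZ.extOneZero_left (hYV.extOneZero_right (hExt ν μ (hμ ν hν))))
      exact ⟨W, .step V W Z a b ha hb hab hV ⟨ν, ⟨hν, hνμ⟩, hZ⟩, hYV.equiv e⟩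

/-- Standard filtrations pass to direct summands: if the identity of `Y` factors through finitely
many modules with a standard filtration, then `Y` has a standard filtration. -/
lemma Filt.of_sum_eq [Finite Λ] (hHom : ∀ l m : Λ, ¬ l ≤ m → ∀ f : D l →ₗ[A] D m, f = 0)
    (hExt : ∀ l m : Λ, ¬ l < m → ExtOneZero A (D l) (D m)) (S : Set Λ)
    {κ : Type} [Fintype κ] {X : κ → Type} [∀ j, AddCommGroup (X j)] [∀ j, Module A (X j)]
    {Y : Type} [AddCommGroup Y] [Module A Y] (i : ∀ j, X j →ₗ[A] Y) (p : ∀ j, Y →ₗ[A] X j)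
    (hip : ∀ y, ∑ j, i j (p j y) = y) (h : ∀ j, Filt A (AddFactor A D S) (X j)) :
    Filt A (AddFactor A D S) Y := by
  induction hn : S.ncard using Nat.strong_induction_on generalizing S X Y with
  | _ n ih =>
    rcases S.eq_empty_or_nonempty with rfl | hne
    · have : Subsingleton Y := subsingleton_of_forall_eq 0 fun y => by
        rw [← hip y]
        refine Finset.sum_eq_zero fun j _ => ?_
        rw [(h j).addFactor_hom_eq_zero_left (by simp) (i j), LinearMap.zero_apply]
      exact .zero Y
    · obtain ⟨μ, hμS, hμ⟩ := S.toFinite.exists_minimal hne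
      have hmin : ∀ ν ∈ S, ¬ ν < μ := fun ν hν hlt => hlt.not_ge (hμ hν hlt.le)
      choose V hV hXV using fun j => (h j).exists_submodule_of_minimal hExt hmin
      have hVV : ∀ j k (f : X j →ₗ[A] X k), ∀ v ∈ V j, f v ∈ V k := fun j k f v hv => by
        have : (V k).mkQ ∘ₗ f ∘ₗ (V j).subtype = 0 :=
          (hV j).addFactor_hom_eq_zero_left (fun ν hν => (hXV k).hom_eq_zero_right
            (hHom ν μ fun hle => hmin ν hν.1 (lt_of_le_of_ne hle hν.2))) _
        exact (Submodule.Quotient.mk_eq_zero (V k)).1 (LinearMap.congr_fun this ⟨v, hv⟩)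
      let W : Submodule A Y := ⨅ j, (V j).comap (p j)
      have hW : ∀ y, y ∈ W ↔ ∀ j, p j y ∈ V j := fun y => by simp [W]
      have hiW : ∀ j, ∀ v ∈ V j, i j v ∈ W := fun j v hv =>
        (hW _).2 fun k => hVV j k (p k ∘ₗ i j) v hv
      have hWfilt : Filt A (AddFactor A D (S \ {μ})) W :=
        ih (S \ {μ}).ncard (hn ▸ Set.ncard_sdiff_singleton_lt_of_mem hμS) (S \ {μ})
          (X := fun j => V j) (fun j => (i j).restrict (hiW j))
          (fun j => (p j).restrict fun y hy => (hW y).1 hy j)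
          (fun y => Subtype.ext (by simpa using hip y.1)) hV rfl
      have hYW : AddOf A (D μ) (Y ⧸ W) := by
        refine .of_sum_eq hXV (fun j => (V j).mapQ W (i j) (hiW j))
          (fun j => W.mapQ (V j) (p j) fun y hy => (hW y).1 hy j) fun y => ?_
        obtain ⟨y, rfl⟩ := W.mkQ_surjective y
        conv_rhs => rw [← hip y, map_sum]
        rfl
      exact .step W Y (Y ⧸ W) W.subtype W.mkQ W.subtype_injective W.mkQ_surjective
        (exact_subtype_mkQ W) (hWfilt.mono_addFactor Set.sdiff_subset) ⟨μ, hμS, hYW⟩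

end StandardFiltrations

section TensorMap

variable {R : Type} [CommRing R] {A : Type} [Ring A] [Algebra R A]

/-- Let `L` be in `add D`, where `End_A(D) = R` and `Hom_A(D, N) ≃ R`, and suppose that `A` acts on
`L` on the right by endomorphisms. If `N ≃ Hom_A(L, N)` compatibly with this action and `M'` maps
onto `Hom_A(L, M)`, then `M'` maps onto `N ⊗ Hom_A(D, M)` with the same kernel. -/
lemma AddOf.exists_surjective_tensor {D L N M M' : Type} [AddCommGroup D] [Module R D] [Module A D]
    [IsScalarTower R A D] [AddCommGroup L] [Module A L] [AddCommGroup N] [Module R N] [Module A N]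
    [IsScalarTower R A N] [AddCommGroup M] [Module R M] [Module A M] [IsScalarTower R A M]
    [AddCommGroup M'] [Module R M'] [Module A M'] [IsScalarTower R A M']
    (hL : AddOf A D L) (e : (D →ₗ[A] N) ≃ₗ[R] R)
    (hend : ∀ f : D →ₗ[A] D, ∃ r : R, ∀ d, f d = r • d) (τ : A → L →ₗ[A] L)
    (ρN : N →ₗ[R] L →ₗ[A] N) (hN : Function.Bijective ρN)
    (hτN : ∀ a y x, ρN (a • y) x = ρN y (τ a x))
    (ρM : M' →ₗ[R] L →ₗ[A] M) (hM : Function.Surjective ρM)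
    (hτM : ∀ a m x, ρM (a • m) x = ρM m (τ a x)) :
    ∃ F : M' →ₗ[A] N ⊗[R] (D →ₗ[A] M), Function.Surjective F ∧ ∀ m, F m = 0 ↔ ρM m = 0 := by
  obtain ⟨ι, _, i, p, hip⟩ := hL
  let h : D →ₗ[A] N := e.symm 1
  have hh : ∀ (f : D →ₗ[A] N) d, f d = e f • h d := fun f d => by
    have : f = e f • h := e.injective (by simp [h])
    exact LinearMap.congr_fun this d
  have hsmul : ∀ (r : R) d, h (r • d) = r • h d := fun r d => h.map_smul_of_tower r d
  choose y hy using fun k => hN.2 (h ∘ₗ p k)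
  replace hy : ∀ k x, ρN (y k) x = h (p k x) := fun k x => LinearMap.congr_fun (hy k) x
  -- an endomorphism of `L` acts on the `y k` by its matrix
  have hmat : ∀ (σ : L →ₗ[A] L) (r : ι → ι → R), (∀ k j d, p k (σ (i j d)) = r k j • d) →
      ∀ k x, ρN (∑ j, r k j • y j) x = h (p k (σ x)) := fun σ r hr k x => by
    conv_rhs => rw [← hip x]
    simp only [map_sum, LinearMap.sum_apply, map_smul, LinearMap.smul_apply, hy, hr, hsmul]
  choose t ht using fun k j => hend (p k ∘ₗ i j)
  replace ht : ∀ k j d, p k (i j d) = t k j • d := ht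
  have hty : ∀ k, ∑ j, t k j • y j = y k := fun k => hN.1 (by
    ext x
    rw [hmat LinearMap.id t ht, hy]
    rfl)
  let F₀ : M' →ₗ[R] N ⊗[R] (D →ₗ[A] M) :=
    ∑ k, TensorProduct.mk R N (D →ₗ[A] M) (y k) ∘ₗ LinearMap.lcomp R M (i k) ∘ₗ ρM
  have hF₀ : ∀ m, F₀ m = ∑ k, y k ⊗ₜ[R] (ρM m ∘ₗ i k) := fun m => by
    simp [F₀, LinearMap.sum_apply]
    rfl
  have hF₀a : ∀ (a : A) m, F₀ (a • m) = a • F₀ m := fun a m => by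
    choose r hr using fun k j => hend (p k ∘ₗ τ a ∘ₗ i j)
    replace hr : ∀ k j d, p k (τ a (i j d)) = r k j • d := hr
    have hay : ∀ k, a • y k = ∑ j, r k j • y j := fun k => hN.1 (by
      ext x
      rw [hmat (τ a) r hr, hτN, hy])
    have ham : ∀ j, ρM (a • m) ∘ₗ i j = ∑ k, r k j • (ρM m ∘ₗ i k) := fun j => by
      ext d
      rw [LinearMap.comp_apply, hτM]
      conv_lhs => rw [← hip (τ a (i j d))]
      simp only [map_sum, hr, LinearMap.sum_apply, LinearMap.smul_apply, LinearMap.comp_apply]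
      exact Finset.sum_congr rfl fun k _ => (ρM m ∘ₗ i k).map_smul_of_tower (r k j) d
    simp only [hF₀, Finset.smul_sum, TensorProduct.smul_tmul', hay, ham, TensorProduct.tmul_sum,
      TensorProduct.sum_tmul]
    rw [Finset.sum_comm]
    simp only [TensorProduct.smul_tmul]
  let F : M' →ₗ[A] N ⊗[R] (D →ₗ[A] M) :=
    { toFun := F₀, map_add' := F₀.map_add, map_smul' := hF₀a }
  refine ⟨F, fun z => ?_, fun m => ⟨fun hm => ?_, fun hm => ?_⟩⟩
  · show ∃ m, F₀ m = z
    rw [← Set.mem_range, ← LinearMap.coe_range, SetLike.mem_coe]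
    induction z with
    | zero => exact zero_mem _
    | add z w hz hw => exact add_mem hz hw
    | tmul z w =>
      have hz : ρN z = ρN (∑ k, e (ρN z ∘ₗ i k) • y k) := by
        ext x
        conv_lhs => rw [← hip x]
        simp only [map_sum, LinearMap.sum_apply, map_smul, LinearMap.smul_apply, hy]
        exact Finset.sum_congr rfl fun k _ => hh (ρN z ∘ₗ i k) (p k x)
      rw [hN.1 hz, TensorProduct.sum_tmul]
      refine sum_mem fun k _ => ?_
      rw [← TensorProduct.smul_tmul']
      refine Submodule.smul_mem _ _ ?_
      obtain ⟨m, hm⟩ := hM (w ∘ₗ p k)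
      refine ⟨m, ?_⟩
      have : ∀ j, ρM m ∘ₗ i j = t k j • w := fun j => by
        ext d
        rw [hm]
        simp only [LinearMap.comp_apply, ht, LinearMap.smul_apply]
        exact w.map_smul_of_tower _ _
      rw [hF₀]
      simp only [this, ← TensorProduct.smul_tmul]
      rw [← TensorProduct.sum_tmul, hty]
  · ext x
    let s : ι → N →ₗ[R] R := fun k => e.toLinearMap ∘ₗ LinearMap.lcomp R N (i k) ∘ₗ ρN
    have hs : ∀ k z d, ρN z (i k d) = s k z • h d := fun k z d => hh (ρN z ∘ₗ i k) d
    have hst : ∀ k j, s k (y j) = t j k := fun k j => by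
      have : e.symm (s k (y j)) = t j k • h := by
        ext d
        have h1 : e.symm (s k (y j)) = ρN (y j) ∘ₗ i k := e.symm_apply_apply _
        rw [h1, LinearMap.comp_apply, hy, ht, hsmul]
        rfl
      rw [LinearEquiv.symm_apply_eq] at this
      simpa [h] using this
    let Φ : N ⊗[R] (D →ₗ[A] M) →ₗ[R] M := TensorProduct.lift
      (LinearMap.mk₂ R (fun z w => ∑ k, s k z • w (p k x))
        (fun z z' w => by simp [add_smul, Finset.sum_add_distrib])
        (fun r z w => by simp [mul_smul, Finset.smul_sum])
        (fun z w w' => by simp [Finset.sum_add_distrib])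
        (fun r z w => by simp [Finset.smul_sum, smul_comm r]))
    have h0 : Φ (F₀ m) = 0 := by
      rw [show F₀ m = 0 from hm, map_zero]
    have hx : ∀ j, p j x = ∑ k, t j k • p k x := fun j => by
      conv_lhs => rw [← hip x]
      simp only [map_sum, ht]
    rw [LinearMap.zero_apply, ← h0, hF₀, map_sum]
    conv_lhs => rw [← hip x, map_sum]
    refine Finset.sum_congr rfl fun j _ => ?_
    conv_lhs => rw [hx j, map_sum, map_sum]
    simp only [Φ, TensorProduct.lift.tmul, LinearMap.mk₂_apply, hst]
    exact Finset.sum_congr rfl fun k _ => (ρM m ∘ₗ i j).map_smul_of_tower (t j k) _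
  · show F₀ m = 0
    rw [hF₀]
    simp [hm]

end TensorMap

section IdealAction

variable {R : Type} [CommRing R] {A : Type} [Ring A] [Algebra R A]

/-- The submodule of elements of `M` killed by the two-sided ideal generated by `V`. -/
def annSub (V : Submodule A A) (M : Type) [AddCommGroup M] [Module A M] : Submodule A M where
  carrier := {m | ∀ v ∈ V, ∀ a : A, (v * a) • m = 0}
  add_mem' hx hy v hv a := by rw [smul_add, hx v hv, hy v hv, add_zero]
  zero_mem' v _ a := smul_zero _
  smul_mem' b x hx v hv a := by rw [← mul_smul, mul_assoc]; exact hx v hv _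

lemma mem_annSub_iff {V : Submodule A A} (hV : ∀ v ∈ V, ∀ a, v * a ∈ V) {M : Type}
    [AddCommGroup M] [Module A M] {m : M} : m ∈ annSub V M ↔ ∀ v ∈ V, v • m = 0 :=
  ⟨fun h v hv => by simpa using h v hv 1, fun h v hv a => h _ (hV v hv a)⟩

lemma mul_mem_of_hom_eq_zero {V : Submodule A A} (h : ∀ f : V →ₗ[A] A ⧸ V, f = 0) (v : A)
    (hv : v ∈ V) (a : A) : v * a ∈ V := by
  have := LinearMap.congr_fun (h (V.mkQ ∘ₗ LinearMap.toSpanSingleton A A a ∘ₗ V.subtype)) ⟨v, hv⟩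
  simpa using this

variable {M M' : Type} [AddCommGroup M] [Module R M] [Module A M] [IsScalarTower R A M]
  [AddCommGroup M'] [Module R M'] [Module A M'] [IsScalarTower R A M']

/-- For elements `m` of `M` killed by `V₀`, the map `V / V₀ → M`, `v ↦ v • m`. -/
def idealAction (V : Submodule A A) (V₀ : Submodule A V) (j : M' →ₗ[A] M)
    (hj : ∀ m, ∀ v ∈ V₀, (v : A) • j m = 0) : M' →ₗ[R] (V ⧸ V₀) →ₗ[A] M where
  toFun m := V₀.liftQ (LinearMap.toSpanSingleton A M (j m) ∘ₗ V.subtype) (fun v hv => hj m v hv)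
  map_add' m m' := by
    ext v
    show (v : A) • j (m + m') = (v : A) • j m + (v : A) • j m'
    rw [map_add, smul_add]
  map_smul' r m := by
    ext v
    simp only [LinearMap.comp_apply, Submodule.mkQ_apply, Submodule.liftQ_apply, RingHom.id_apply,
      LinearMap.smul_apply, LinearMap.toSpanSingleton_apply, LinearMap.map_smul_of_tower]
    exact smul_comm _ _ _

variable {Λ : Type} [PartialOrder Λ] {D : Λ → Type} [∀ l, AddCommGroup (D l)]
  [∀ l, Module R (D l)] [∀ l, Module A (D l)] [∀ l, IsScalarTower R A (D l)]

lemma mul_mem_of_filt (hHom : ∀ l m : Λ, ¬ l ≤ m → ∀ f : D l →ₗ[A] D m, f = 0) {S : Set Λ}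
    (hS : IsUpperSet S) {V : Submodule A A} (hV : Filt A (AddFactor A D S) V)
    (hV' : Filt A (AddFactor A D Sᶜ) (A ⧸ V)) (v : A) (hv : v ∈ V) (a : A) : v * a ∈ V :=
  mul_mem_of_hom_eq_zero (fun f => hV.addFactor_hom_eq_zero_left (fun l hl =>
    hV'.addFactor_hom_eq_zero_right fun m hm => hHom l m fun hlm => hm (hS hlm hl)) f) v hv a

/-- Removing a minimal element `μ` from `S` shrinks the ideal attached to `S`, and on a module `M`
with `Ext¹(D ν, M) = 0` the layer cut out by the two ideals is `N ⊗ Hom_A(D μ, M)`. -/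
lemma exists_ideal_step (hHom : ∀ l m : Λ, ¬ l ≤ m → ∀ f : D l →ₗ[A] D m, f = 0)
    (hExt : ∀ l m : Λ, ¬ l < m → ExtOneZero A (D l) (D m))
    {N : Type} [AddCommGroup N] [Module R N] [Module A N] [IsScalarTower R A N]
    {S : Set Λ} (hS : IsUpperSet S) {μ : Λ} (hμS : μ ∈ S) (hμ : ∀ ν ∈ S, ¬ ν < μ)
    (hend : ∀ f : D μ →ₗ[A] D μ, ∃ r : R, ∀ d, f d = r • d)
    (e : (D μ →ₗ[A] N) ≃ₗ[R] R) (hN : ∀ ν, ν ≠ μ → ∀ f : D ν →ₗ[A] N, f = 0)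
    (hNE : ∀ ν, ExtOneZero A (D ν) N)
    {V : Submodule A A} (hV : Filt A (AddFactor A D S) V)
    (hV' : Filt A (AddFactor A D Sᶜ) (A ⧸ V)) :
    ∃ W : Submodule A A, W ≤ V ∧ Filt A (AddFactor A D (S \ {μ})) W ∧
      Filt A (AddFactor A D (S \ {μ})ᶜ) (A ⧸ W) ∧
      ∀ (M : Type) [AddCommGroup M] [Module R M] [Module A M] [IsScalarTower R A M],
        (∀ ν, ExtOneZero A (D ν) M) →
        ∃ F : annSub W M →ₗ[A] N ⊗[R] (D μ →ₗ[A] M), Function.Surjective F ∧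
          ∀ m, F m = 0 ↔ (m : M) ∈ annSub V M := by
  obtain ⟨V₀, hV₀, hL⟩ := hV.exists_submodule_of_minimal hExt hμ
  let W := V₀.map V.subtype
  have hVW : ∀ w : A, w ∈ W ↔ ∃ v ∈ V₀, (v : A) = w := fun w => Iff.rfl
  have hW : Filt A (AddFactor A D (S \ {μ})) W :=
    hV₀.equiv (Submodule.equivMapOfInjective _ V.subtype_injective V₀)
  have hW' : Filt A (AddFactor A D (S \ {μ})ᶜ) (A ⧸ W) := by
    obtain ⟨a, b, ha, hb, hab, -, -⟩ := exists_quotient_exact V.subtype V.mkQ V.subtype_injective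
      V.mkQ_surjective (exact_subtype_mkQ V) V₀
    exact .of_exact a b ha hb hab (.of_factor ⟨μ, by simp, hL⟩)
      (hV'.mono_addFactor (Set.compl_subset_compl.2 Set.sdiff_subset))
  have hSμ : IsUpperSet (S \ {μ}) := fun a b hab ha =>
    ⟨hS hab ha.1, fun hb => hμ a ha.1 (lt_of_le_of_ne (hb ▸ hab) ha.2)⟩
  have hVr := mul_mem_of_filt hHom hS hV hV'
  have hWr := mul_mem_of_filt hHom hSμ hW hW'
  refine ⟨W, Submodule.map_subtype_le V V₀, hW, hW', fun M _ _ _ _ hM => ?_⟩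
  let rmul : A → V →ₗ[A] V := fun a =>
    (LinearMap.toSpanSingleton A A a ∘ₗ V.subtype).codRestrict V (fun v => hVr v v.2 a)
  let τ : A → (V ⧸ V₀) →ₗ[A] V ⧸ V₀ := fun a => V₀.mapQ V₀ (rmul a) (fun v hv => by
    obtain ⟨v', hv', hvv⟩ := (hVW _).1 (hWr v ⟨v, hv, rfl⟩ a)
    have : rmul a v = v' := Subtype.ext hvv.symm
    rw [Submodule.mem_comap, this]
    exact hv')
  have hWN : ∀ n : N, ∀ v ∈ V₀, (v : A) • n = 0 := fun n v hv => by
    have := hV₀.addFactor_hom_eq_zero_left (fun l hl => hN l hl.2)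
      (LinearMap.toSpanSingleton A N n ∘ₗ V.subtype ∘ₗ V₀.subtype)
    simpa using LinearMap.congr_fun this ⟨v, hv⟩
  let ρN : N →ₗ[R] (V ⧸ V₀) →ₗ[A] N := idealAction V V₀ LinearMap.id hWN
  let ρM : annSub W M →ₗ[R] (V ⧸ V₀) →ₗ[A] M := idealAction V V₀ (annSub W M).subtype
    (fun m v hv => (mem_annSub_iff hWr).1 m.2 v ⟨v, hv, rfl⟩)
  have hext : ∀ (X : Type) [AddCommGroup X] [Module A X], (∀ ν, ExtOneZero A (D ν) X) →
      ∀ φ : (V ⧸ V₀) →ₗ[A] X, ∃ x : X, ∀ v : V, (v : A) • x = φ (V₀.mkQ v) := fun X _ _ hX φ => by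
    obtain ⟨ψ, hψ⟩ := hV'.addFactor_extOneZero_left (fun l _ => hX l) V A V.subtype V.mkQ
      V.subtype_injective V.mkQ_surjective (exact_subtype_mkQ V) (φ ∘ₗ V₀.mkQ)
    refine ⟨ψ 1, fun v => ?_⟩
    rw [← map_smul, smul_eq_mul, mul_one]
    exact hψ v
  have hρN : Function.Bijective ρN := by
    refine ⟨?_, fun φ => ?_⟩
    · rw [injective_iff_map_eq_zero]
      intro n hn
      have := hV'.addFactor_hom_eq_zero_left (N := N)
        (fun l hl => hN l fun h => hl (h ▸ hμS)) (V.liftQ (LinearMap.toSpanSingleton A N n)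
          (fun v hv => LinearMap.congr_fun hn (V₀.mkQ ⟨v, hv⟩)))
      have h1 : (1 : A) • n = 0 := LinearMap.congr_fun this (V.mkQ 1)
      rwa [one_smul] at h1
    · obtain ⟨n, hn⟩ := hext N hNE φ
      exact ⟨n, LinearMap.ext fun x => by
        obtain ⟨v, rfl⟩ := V₀.mkQ_surjective x
        exact hn v⟩
  have hρM : Function.Surjective ρM := fun φ => by
    obtain ⟨m, hm⟩ := hext M hM φ
    refine ⟨⟨m, (mem_annSub_iff hWr).2 fun w hw => ?_⟩, LinearMap.ext fun x => ?_⟩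
    · obtain ⟨v, hv, rfl⟩ := (hVW w).1 hw
      rw [hm, V₀.mkQ_apply, (Submodule.Quotient.mk_eq_zero V₀ (x := v)).2 hv, map_zero]
    · obtain ⟨v, rfl⟩ := V₀.mkQ_surjective x
      exact hm v
  obtain ⟨F, hF, hF0⟩ := hL.exists_surjective_tensor e hend τ ρN hρN
    (fun a y x => by
      obtain ⟨v, rfl⟩ := V₀.mkQ_surjective x
      exact (mul_smul (v : A) a y).symm) ρM hρM
    (fun a m x => by
      obtain ⟨v, rfl⟩ := V₀.mkQ_surjective x
      exact (mul_smul (v : A) a (m : M)).symm)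
  refine ⟨F, hF, fun m => ?_⟩
  rw [hF0, mem_annSub_iff hVr]
  refine ⟨fun hm v hv => LinearMap.congr_fun hm (V₀.mkQ ⟨v, hv⟩), fun hm => ?_⟩
  ext v
  exact hm v v.2

end IdealAction

section StandardSystem

variable {R : Type} [CommRing R] {A : Type} [Ring A] [Algebra R A] {Λ : Type}

/-- The homological properties of the standard modules of a split quasi-hereditary algebra. -/
structure IsStandardSystem (R : Type) [CommRing R] (A : Type) [Ring A] [Algebra R A] {Λ : Type}
    [PartialOrder Λ] (D : Λ → Type) [∀ l, AddCommGroup (D l)] [∀ l, Module R (D l)]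
    [∀ l, Module A (D l)] [∀ l, IsScalarTower R A (D l)] : Prop where
  hom_eq_zero : ∀ l m : Λ, ¬ l ≤ m → ∀ f : D l →ₗ[A] D m, f = 0
  ext : ∀ l m : Λ, ¬ l < m → ExtOneZero A (D l) (D m)
  end_eq_smul : ∀ (l : Λ) (f : D l →ₗ[A] D l), ∃ r : R, ∀ d, f d = r • d
  filt_self : Filt A (AddFactor A D Set.univ) A

/-- The orthogonality relations between standard and costandard modules. -/
structure IsOrthogonalSystem (R : Type) [CommRing R] (A : Type) [Ring A] [Algebra R A] {Λ : Type}
    (D : Λ → Type) [∀ l, AddCommGroup (D l)] [∀ l, Module R (D l)]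
    [∀ l, Module A (D l)] [∀ l, IsScalarTower R A (D l)]
    (N : Λ → Type) [∀ l, AddCommGroup (N l)] [∀ l, Module R (N l)]
    [∀ l, Module A (N l)] [∀ l, IsScalarTower R A (N l)] : Prop where
  equiv : ∀ l, Nonempty ((D l →ₗ[A] N l) ≃ₗ[R] R)
  hom_eq_zero : ∀ l m : Λ, l ≠ m → ∀ f : D l →ₗ[A] N m, f = 0
  ext : ∀ l m : Λ, ExtOneZero A (D l) (N m)

variable {D : Λ → Type} [∀ l, AddCommGroup (D l)]
  [∀ l, Module R (D l)] [∀ l, Module A (D l)] [∀ l, IsScalarTower R A (D l)]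
  {N : Λ → Type} [∀ l, AddCommGroup (N l)]
  [∀ l, Module R (N l)] [∀ l, Module A (N l)] [∀ l, IsScalarTower R A (N l)]

/-- `Z` is isomorphic to `N μ ⊗ Hom_A(D μ, M)` for some `μ ∈ I`. -/
def HomTensorFactor (R : Type) [CommRing R] {A : Type} [Ring A] [Algebra R A] {Λ : Type}
    (D : Λ → Type) [∀ l, AddCommGroup (D l)] [∀ l, Module A (D l)]
    (N : Λ → Type) [∀ l, AddCommGroup (N l)] [∀ l, Module R (N l)]
    [∀ l, Module A (N l)] [∀ l, IsScalarTower R A (N l)]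
    (M : Type) [AddCommGroup M] [Module R M] [Module A M] [IsScalarTower R A M] (I : Set Λ)
    (Z : Type) [AddCommGroup Z] [Module A Z] : Prop :=
  ∃ μ ∈ I, Nonempty (Z ≃ₗ[A] N μ ⊗[R] (D μ →ₗ[A] M))

omit [∀ l, Module R (D l)] [∀ l, IsScalarTower R A (D l)] in
lemma filt_annSub_of_surjective {V W : Submodule A A} (hWV : W ≤ V) {M : Type} [AddCommGroup M]
    [Module R M] [Module A M] [IsScalarTower R A M] {I : Set Λ} {μ : Λ}
    (hV : Filt A (HomTensorFactor R D N M (I \ {μ})) (annSub V M)) (hμ : μ ∈ I)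
    (F : annSub W M →ₗ[A] N μ ⊗[R] (D μ →ₗ[A] M)) (hF : Function.Surjective F)
    (hF0 : ∀ m, F m = 0 ↔ (m : M) ∈ annSub V M) :
    Filt A (HomTensorFactor R D N M I) (annSub W M) := by
  have hle : annSub V M ≤ annSub W M := fun m hm w hw => hm w (hWV hw)
  refine .step _ _ _ (Submodule.inclusion hle) F (Submodule.inclusion_injective hle) hF
    (fun m => ?_) (hV.mono fun _ _ _ ⟨ν, hν, hZ⟩ => ⟨ν, hν.1, hZ⟩) ⟨μ, hμ, ⟨.refl _ _⟩⟩
  rw [hF0]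
  exact ⟨fun hm => ⟨⟨m, hm⟩, rfl⟩, by rintro ⟨x, rfl⟩; exact x.2⟩

/-- Every lower set `I` has an attached ideal `V` such that, for `M` with `Ext¹(D ν, M) = 0`, the
part of `M` killed by `V` is filtered by `N μ ⊗ Hom_A(D μ, M)`, `μ ∈ I`. -/
lemma IsStandardSystem.exists_ideal [Finite Λ] [PartialOrder Λ] (hD : IsStandardSystem R A D)
    (hN : IsOrthogonalSystem R A D N) (I : Set Λ) (hI : IsLowerSet I) :
    ∃ V : Submodule A A, Filt A (AddFactor A D Iᶜ) V ∧ Filt A (AddFactor A D Iᶜᶜ) (A ⧸ V) ∧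
      ∀ (M : Type) [AddCommGroup M] [Module R M] [Module A M] [IsScalarTower R A M],
        (∀ ν, ExtOneZero A (D ν) M) → Filt A (HomTensorFactor R D N M I) (annSub V M) := by
  induction hn : I.ncard using Nat.strong_induction_on generalizing I with
  | _ n ih =>
    rcases I.eq_empty_or_nonempty with rfl | hne
    · refine ⟨⊤, ?_, .zero _, fun M _ _ _ _ _ => ?_⟩
      · rw [Set.compl_empty]
        exact hD.filt_self.equiv Submodule.topEquiv.symm
      · have : Subsingleton (annSub (⊤ : Submodule A A) M) :=
          subsingleton_of_forall_eq 0 fun m => Subtype.ext (by simpa using m.2 1 trivial 1)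
        exact .zero _
    · obtain ⟨μ, hμI, hμ⟩ := I.toFinite.exists_maximal hne
      have hlt : (I \ {μ}).ncard < n := hn ▸ Set.ncard_sdiff_singleton_lt_of_mem hμI
      have hI' : IsLowerSet (I \ {μ}) := fun a b hba ha =>
        ⟨hI hba ha.1, fun hb => ha.2 (le_antisymm (hμ ha.1 (hb ▸ hba)) (hb ▸ hba))⟩
      obtain ⟨V, hV, hV', hVM⟩ := ih _ hlt _ hI' rfl
      obtain ⟨e⟩ := hN.equiv μ
      have hS : (I \ {μ})ᶜ \ {μ} = Iᶜ := by
        ext x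
        by_cases hx : x = μ <;> simp [hx, hμI]
      obtain ⟨W, hWV, hW, hW', hWM⟩ := exists_ideal_step (N := N μ) hD.hom_eq_zero hD.ext
        hI'.compl (μ := μ) (by simp) (fun ν hν hνμ => hν ⟨hI hνμ.le hμI, hνμ.ne⟩)
        (hD.end_eq_smul μ) e (fun ν hν => hN.hom_eq_zero ν μ hν) (fun ν => hN.ext ν μ) hV hV'
      rw [hS] at hW hW'
      refine ⟨W, hW, hW', fun M _ _ _ _ hM => ?_⟩
      obtain ⟨F, hF, hF0⟩ := hWM M hM
      exact filt_annSub_of_surjective hWV (hVM M hM) hμI F hF hF0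

lemma TensorFactor.addFactor {S : Set Λ} {X : Type} [AddCommGroup X] [Module A X]
    (h : TensorFactor R A Λ D S X) : AddFactor A D S X := by
  have := h.fin
  have := h.proj
  obtain ⟨n, f, hf⟩ := Module.Finite.exists_fin' R h.U
  obtain ⟨g, hg⟩ := Module.projective_lifting_property f LinearMap.id hf
  refine ⟨h.lam, h.mem, AddOf.equiv ⟨Fin n, inferInstance, fun k =>
    TensorProduct.AlgebraTensorModule.lTensor A (D h.lam) (f ∘ₗ LinearMap.single R _ k) ∘ₗ
      (TensorProduct.AlgebraTensorModule.rid R A (D h.lam)).symm.toLinearMap,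
    fun k => (TensorProduct.AlgebraTensorModule.rid R A (D h.lam)).toLinearMap ∘ₗ
      TensorProduct.AlgebraTensorModule.lTensor A (D h.lam) (LinearMap.proj k ∘ₗ g),
    fun z => ?_⟩ h.iso.symm⟩
  induction z with
  | zero => simp
  | add z w hz hw => simp only [map_add, Finset.sum_add_distrib, hz, hw]
  | tmul d u =>
    have hu : u = ∑ k, g u k • f (Pi.single k 1) := by
      conv_lhs => rw [show u = f (g u) from (LinearMap.congr_fun hg u).symm,
        ← Finset.univ_sum_single (g u), map_sum]
      refine Finset.sum_congr rfl fun k _ => ?_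
      rw [← map_smul, ← Pi.single_smul, smul_eq_mul, mul_one]
    conv_rhs => rw [hu, TensorProduct.tmul_sum]
    refine Finset.sum_congr rfl fun k _ => ?_
    simp

lemma InFilt.filt {S : Set Λ} {X : Type} [AddCommGroup X] [Module A X]
    (h : InFilt R A Λ D S X) : Filt A (AddFactor A D S) X := by
  obtain ⟨-, n, c, h0, h1, hc, hQ⟩ := h
  exact .of_chain n c h0 h1 hc fun i => (hQ i).some.addFactor

lemma IsCostandard.isOrthogonalSystem [Fintype Λ] [PartialOrder Λ] (h : IsCostandard R A Λ D N) :
    IsOrthogonalSystem R A D N where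
  equiv := h.2.1
  hom_eq_zero := h.2.2.1
  ext l m := .of_extVanish (h.2.2.2 l m 1 one_pos)

lemma SplitQH.isStandardSystem [Fintype Λ] [PartialOrder Λ] (h : SplitQH R A Λ D) :
    IsStandardSystem R A D := by
  classical
  have hHom : ∀ l m : Λ, ¬ l ≤ m → ∀ f : D l →ₗ[A] D m, f = 0 := fun l m hlm f => by
    by_contra hf
    exact hlm (h.hom_le l m ⟨f, hf⟩)
  have hExt : ∀ l m : Λ, ¬ l < m → ExtOneZero A (D l) (D m) := fun l m hlm => by
    have := h.P_proj l
    refine .of_presentation _ (h.epi l) (h.epi_surj l) (exact_subtype_ker _) fun φ => ⟨0, ?_⟩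
    have : φ = 0 := (h.ker_filt l).filt.addFactor_hom_eq_zero_left
      (fun k hk => hHom k m fun hkm => hlm (lt_of_lt_of_le hk hkm)) φ
    simp [this]
  refine ⟨hHom, hExt, fun l f => ?_, ?_⟩
  · obtain ⟨e⟩ := h.endIso l
    refine ⟨e f, fun d => ?_⟩
    have : f = algebraMap R (Module.End A (D l)) (e f) := e.injective (by simp)
    conv_lhs => rw [this]
    rfl
  · obtain ⟨n, i, p, hip⟩ := h.add_gen (ModuleCat.of A A) (inferInstanceAs (Module.Finite A A))
      (inferInstanceAs (Module.Projective A A))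
    refine .of_sum_eq hHom hExt Set.univ (κ := Fin n × Λ) (X := fun x => h.P x.2)
      (fun x => p ∘ₗ LinearMap.single A (fun _ => ∀ l, (h.P l : Type)) x.1 ∘ₗ
        LinearMap.single A (fun l => (h.P l : Type)) x.2)
      (fun x => LinearMap.proj x.2 ∘ₗ LinearMap.proj x.1 ∘ₗ i) (fun a => ?_) (fun x => ?_)
    · conv_rhs => rw [show a = p (i a) from (LinearMap.congr_fun hip a).symm]
      simp only [LinearMap.comp_apply, ← map_sum, Fintype.sum_prod_type]
      congr 1
      conv_rhs => rw [← Finset.univ_sum_single (i a)]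
      refine Finset.sum_congr rfl fun k _ => ?_
      exact congrArg (Pi.single k) (Finset.univ_sum_single (i a k))
    · exact .step _ _ _ _ (h.epi x.2) (LinearMap.ker (h.epi x.2)).subtype_injective
        (h.epi_surj x.2) (exact_subtype_ker _)
        ((h.ker_filt x.2).filt.mono_addFactor (Set.subset_univ _)) ⟨x.2, trivial, .refl⟩

end StandardSystem

section HomProjective

variable {R : Type} [CommRing R] {A : Type} [Ring A] [Algebra R A]
  {M : Type} [AddCommGroup M] [Module R M] [Module A M] [IsScalarTower R A M]

lemma AddOf.projective {W P : Type} [AddCommGroup W] [Module R W] [AddCommGroup P] [Module R P]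
    (h : AddOf R P W) [Module.Projective R P] : Module.Projective R W := by
  obtain ⟨ι, _, i, p, hip⟩ := h
  classical
  have : Module.Projective R (Π₀ _ : ι, P) := inferInstance
  have : Module.Projective R (ι → P) := .of_equiv DFinsupp.linearEquivFunOnFintype
  refine .of_split (LinearMap.pi p) (∑ k, i k ∘ₗ LinearMap.proj k) (LinearMap.ext fun w => ?_)
  simpa using hip w

lemma projective_of_exact {U V W : Type} [AddCommGroup U] [Module R U] [AddCommGroup V]
    [Module R V] [AddCommGroup W] [Module R W] (a : U →ₗ[R] V) (b : V →ₗ[R] W)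
    (ha : Function.Injective a) (hb : Function.Surjective b) (hab : Function.Exact a b)
    [Module.Projective R W] : Module.Projective R U ↔ Module.Projective R V := by
  obtain ⟨s, hs⟩ := Module.projective_lifting_property b LinearMap.id hb
  replace hs : ∀ w, b (s w) = w := fun w => LinearMap.congr_fun hs w
  obtain ⟨r, hr⟩ := exists_comp_eq_of_forall_mem_range a ha (LinearMap.id - s ∘ₗ b) (fun x =>
    (hab _).1 (by simp [hs]))
  refine ⟨fun _ => ?_, fun _ => ?_⟩
  · refine .of_split (r.prod b) (a.coprod s) (LinearMap.ext fun v => ?_)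
    simp [hr]
  · refine .of_split a r (LinearMap.ext fun u => ha ?_)
    simp [hr, hab.apply_apply_eq_zero]

lemma hom_projective_of_exact {X Y Z : Type} [AddCommGroup X] [Module A X] [AddCommGroup Y]
    [Module A Y] [AddCommGroup Z] [Module A Z] (i : Y →ₗ[A] X) (p : X →ₗ[A] Z)
    (hi : Function.Injective i) (hp : Function.Surjective p) (hip : Function.Exact i p)
    (hZ : ExtOneZero A Z M) (hY : Module.Projective R (Y →ₗ[A] M)) :
    Module.Projective R (Z →ₗ[A] M) ↔ Module.Projective R (X →ₗ[A] M) := by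
  refine projective_of_exact (LinearMap.lcomp R M p) (LinearMap.lcomp R M i) (fun f g hfg => ?_)
    (fun f => ?_) (fun f => ⟨fun hf => ?_, ?_⟩)
  · ext z
    obtain ⟨x, rfl⟩ := hp z
    exact LinearMap.congr_fun hfg x
  · obtain ⟨g, hg⟩ := hZ Y X i p hi hp hip f
    exact ⟨g, LinearMap.ext hg⟩
  · obtain ⟨g, hg⟩ := exists_comp_eq_of_ker_le p hp f (fun x hx => by
      obtain ⟨y, rfl⟩ := (hip x).1 hx
      exact LinearMap.congr_fun hf y)
    exact ⟨g, LinearMap.ext hg⟩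
  · rintro ⟨g, rfl⟩
    ext y
    simp [hip.apply_apply_eq_zero]

lemma AddOf.hom {D Z : Type} [AddCommGroup D] [Module A D] [AddCommGroup Z] [Module A Z]
    (h : AddOf A D Z) : AddOf R (D →ₗ[A] M) (Z →ₗ[A] M) := by
  obtain ⟨ι, _, i, p, hip⟩ := h
  refine ⟨ι, inferInstance, fun k => LinearMap.lcomp R M (p k), fun k => LinearMap.lcomp R M (i k),
    fun f => LinearMap.ext fun z => ?_⟩
  conv_rhs => rw [← hip z, map_sum]
  simp [LinearMap.sum_apply]

lemma hom_projective_of_projective [Module.Projective R M] (Q : Type) [AddCommGroup Q] [Module A Q]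
    [Module.Finite A Q] [Module.Projective A Q] : Module.Projective R (Q →ₗ[A] M) := by
  obtain ⟨n, f, hf⟩ := Module.Finite.exists_fin' A Q
  obtain ⟨g, hg⟩ := Module.projective_lifting_property f LinearMap.id hf
  have hQ : AddOf A A Q := ⟨Fin n, inferInstance, fun k => f ∘ₗ LinearMap.single A (fun _ => A) k,
    fun k => LinearMap.proj k ∘ₗ g, fun q => by
      simp only [LinearMap.comp_apply, ← map_sum]
      refine Eq.trans (congrArg f ?_) (LinearMap.congr_fun hg q)
      exact Finset.univ_sum_single (g q)⟩
  have : Module.Projective R (A →ₗ[A] M) := .of_equiv (LinearMap.ringLmapEquivSelf A R M).symm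
  exact (AddOf.hom hQ).projective

lemma hom_finite [IsNoetherianRing R] [Module.Finite R M] (X : Type) [AddCommGroup X] [Module A X]
    [Module.Finite A X] : Module.Finite R (X →ₗ[A] M) := by
  obtain ⟨n, f, hf⟩ := Module.Finite.exists_fin' A X
  have : Module.Finite R (A →ₗ[A] M) := .equiv (LinearMap.ringLmapEquivSelf A R M).symm
  refine Module.Finite.of_injective (N := Fin n → A →ₗ[A] M)
    (LinearMap.pi fun k => LinearMap.lcomp R M (f ∘ₗ LinearMap.single A (fun _ => A) k))
    fun φ ψ h => ?_
  ext x
  obtain ⟨x, rfl⟩ := hf x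
  conv_lhs => rw [← Finset.univ_sum_single x]
  conv_rhs => rw [← Finset.univ_sum_single x]
  simp only [map_sum]
  exact Finset.sum_congr rfl fun k _ => LinearMap.congr_fun (congrFun h k) (x k)

variable {Λ : Type} {D : Λ → Type} [∀ l, AddCommGroup (D l)]
  [∀ l, Module R (D l)] [∀ l, Module A (D l)] [∀ l, IsScalarTower R A (D l)]

omit [∀ l, Module R (D l)] [∀ l, IsScalarTower R A (D l)] in
lemma Filt.hom_projective {S : Set Λ} {X : Type} [AddCommGroup X] [Module A X]
    (h : Filt A (AddFactor A D S) X) (hD : ∀ l ∈ S, ExtOneZero A (D l) M)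
    (hDP : ∀ l ∈ S, Module.Projective R (D l →ₗ[A] M)) : Module.Projective R (X →ₗ[A] M) := by
  induction h with
  | zero X =>
    have : Subsingleton (X →ₗ[A] M) := subsingleton_of_forall_eq 0 fun f => by
      ext x
      rw [Subsingleton.elim x 0, map_zero, map_zero]
    infer_instance
  | step Y X Z i p hi hp hip _ hZ ih =>
    obtain ⟨l, hl, hZ⟩ := hZ
    have := hDP l hl
    exact (hom_projective_of_exact i p hi hp hip (hZ.extOneZero_left (hD l hl)) ih).1
      (AddOf.hom hZ).projective

lemma SplitQH.hom_projective [Fintype Λ] [PartialOrder Λ] (h : SplitQH R A Λ D)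
    [Module.Projective R M] (hM : ∀ l, ExtOneZero A (D l) M) (l : Λ) :
    Module.Projective R (D l →ₗ[A] M) := by
  induction l using (wellFounded_gt (α := Λ)).induction with
  | _ l ih =>
    have := h.P_fin l
    have := h.P_proj l
    exact (hom_projective_of_exact _ (h.epi l) (LinearMap.ker (h.epi l)).subtype_injective
      (h.epi_surj l) (exact_subtype_ker _) (hM l)
      ((h.ker_filt l).filt.hom_projective (fun m _ => hM m) fun m hm => ih m hm)).2
      (hom_projective_of_projective (h.P l))

end HomProjective

section UniversalExtension

variable {R : Type} [CommRing R] {A : Type} [Ring A] [Algebra R A]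

lemma exists_fin_forall_eq_sum (R W : Type) [CommRing R] [AddCommGroup W] [Module R W]
    [Module.Finite R W] :
    ∃ (n : ℕ) (φ : Fin n → W), ∀ w, ∃ r : Fin n → R, w = ∑ k, r k • φ k := by
  obtain ⟨n, f, hf⟩ := Module.Finite.exists_fin' R W
  refine ⟨n, fun k => f (Pi.single k 1), fun w => ?_⟩
  obtain ⟨r, rfl⟩ := hf w
  refine ⟨r, ?_⟩
  conv_lhs => rw [← Finset.univ_sum_single r, map_sum]
  refine Finset.sum_congr rfl fun k _ => ?_
  rw [← map_smul, ← Pi.single_smul, smul_eq_mul, mul_one]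

lemma ExtOneZero.pi_fin {M D : Type} [AddCommGroup M] [Module A M] [AddCommGroup D] [Module A D]
    (h : ExtOneZero A M D) (n : ℕ) : ExtOneZero A M (Fin n → D) :=
  AddOf.extOneZero_right ⟨Fin n, inferInstance, LinearMap.single A (fun _ => D), LinearMap.proj,
    fun z => Finset.univ_sum_single z⟩ h

/-- The universal extension of copies of `D` by `T` has no further extensions by `D`. -/
lemma exists_universal_extension [IsNoetherianRing R] [Module.Finite R A] {D P T : Type}
    [AddCommGroup D] [Module A D] [AddCommGroup P] [Module A P] [Module.Finite A P]
    [Module.Projective A P] [AddCommGroup T] [Module R T] [Module A T] [IsScalarTower R A T]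
    [Module.Finite R T] (π : P →ₗ[A] D) (hπ : Function.Surjective π)
    [Module.Finite A (LinearMap.ker π)] (hD : ExtOneZero A D D) :
    ∃ (T' : Type) (_ : AddCommGroup T') (_ : Module R T') (_ : Module A T')
      (_ : IsScalarTower R A T') (_ : Module.Finite R T') (n : ℕ) (f : T →ₗ[A] T')
      (g : T' →ₗ[A] Fin n → D), Function.Injective f ∧ Function.Surjective g ∧
        Function.Exact f g ∧ ExtOneZero A D T' := by
  let K := LinearMap.ker π
  have := hom_finite (R := R) (A := A) (M := T) K
  obtain ⟨n, φ, hφ⟩ := exists_fin_forall_eq_sum R (K →ₗ[A] T)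
  let j : (Fin n → K) →ₗ[A] T × (Fin n → P) :=
    (∑ k, φ k ∘ₗ LinearMap.proj k).prod (-LinearMap.pi fun k => K.subtype ∘ₗ LinearMap.proj k)
  have hj : ∀ z, j z = (∑ k, φ k (z k), fun k => -(z k : P)) := fun z => by
    refine Prod.ext ?_ rfl
    simp [j]
  let V := LinearMap.range j
  let T' := (T × (Fin n → P)) ⧸ V
  let _ : Module R T' := Module.compHom T' (algebraMap R A)
  have : IsScalarTower R A T' := .of_algebraMap_smul fun r x => rfl
  have : Module.Finite A T := .of_restrictScalars_finite R A T
  have : Module.Finite R T' := .trans A T'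
  let f : T →ₗ[A] T' := V.mkQ ∘ₗ LinearMap.inl A T (Fin n → P)
  let a : Fin n → P →ₗ[A] T' := fun k =>
    V.mkQ ∘ₗ LinearMap.inr A T (Fin n → P) ∘ₗ LinearMap.single A (fun _ => P) k
  let g : T' →ₗ[A] Fin n → D := V.liftQ
    (LinearMap.pi fun k => π ∘ₗ LinearMap.proj k ∘ₗ LinearMap.snd A T (Fin n → P)) (by
      rintro _ ⟨z, rfl⟩
      ext k
      simp [hj])
  have hg : ∀ x p, g (V.mkQ (x, p)) = fun k => π (p k) := fun x p => rfl
  have haf : ∀ i (z : K), a i z = f (φ i z) := fun i z => by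
    symm
    refine (Submodule.Quotient.eq V).2 ⟨Pi.single i z, ?_⟩
    rw [hj]
    refine Prod.ext ?_ (funext fun k => ?_)
    · rw [Finset.sum_eq_single i] <;> simp +contextual
    · by_cases hk : k = i
      · subst hk; simp
      · simp [hk]
  have hf : Function.Injective f := by
    rw [injective_iff_map_eq_zero]
    intro x hx
    obtain ⟨z, hz⟩ := (Submodule.Quotient.mk_eq_zero V).1 hx
    rw [hj] at hz
    have hz0 : z = 0 := funext fun k => Subtype.ext (by
      simpa using congrFun (congrArg Prod.snd hz) k)
    have := congrArg Prod.fst hz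
    simpa [hz0] using this.symm
  have hgs : Function.Surjective g := fun d => by
    choose p hp using fun k => hπ (d k)
    exact ⟨V.mkQ (0, p), funext hp⟩
  have hfg : Function.Exact f g := by
    intro t
    obtain ⟨⟨x, p⟩, rfl⟩ := V.mkQ_surjective t
    constructor
    · intro h0
      rw [hg] at h0
      refine ⟨x + ∑ k, φ k ⟨p k, congrFun h0 k⟩, ?_⟩
      refine (Submodule.Quotient.eq V).2 ⟨fun k => ⟨p k, congrFun h0 k⟩, ?_⟩
      rw [hj]
      refine Prod.ext ?_ (funext fun k => ?_) <;> simp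
    · rintro ⟨y, hy⟩
      rw [← hy]
      exact funext fun k => π.map_zero
  refine ⟨T', inferInstance, inferInstance, inferInstance, inferInstance, inferInstance, n, f, g,
    hf, hgs, hfg, ?_⟩
  refine .of_presentation K.subtype π hπ (exact_subtype_ker π) fun φ' => ?_
  obtain ⟨χ, hχ⟩ := hD.pi_fin n K P K.subtype π K.subtype_injective hπ (exact_subtype_ker π)
    (g ∘ₗ φ')
  obtain ⟨χ', hχ'⟩ := Module.projective_lifting_property g χ hgs
  obtain ⟨θ, hθ⟩ := exists_comp_eq_of_forall_mem_range f hf (φ' - χ' ∘ₗ K.subtype) (fun z => by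
    refine (hfg _).1 ?_
    have h1 : g (χ' z) = χ z := LinearMap.congr_fun hχ' z
    have h2 : χ z = g (φ' z) := hχ z
    simp [h1, h2])
  obtain ⟨r, hr⟩ := hφ θ
  refine ⟨χ' + ∑ k, r k • a k, fun z => ?_⟩
  have h1 : f (θ z) = φ' z - χ' z := hθ z
  have h2 : (∑ k, r k • a k) (z : P) = f (θ z) := by
    rw [hr]
    simp only [LinearMap.sum_apply, LinearMap.smul_apply, haf, map_sum]
    exact Finset.sum_congr rfl fun k _ => (f.map_smul_of_tower (r k) (φ k z)).symm
  rw [LinearMap.add_apply, Submodule.subtype_apply, h2, h1]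
  abel

variable {Λ : Type} [Fintype Λ] [PartialOrder Λ] {D : Λ → Type} [∀ l, AddCommGroup (D l)]
  [∀ l, Module R (D l)] [∀ l, Module A (D l)] [∀ l, IsScalarTower R A (D l)]

/-- If `T` has extensions only by standard modules indexed by a lower set `E`, it embeds in a module
without extensions by standard modules, with cokernel filtered by `D μ`, `μ ∈ E`. -/
lemma SplitQH.exists_extension [IsNoetherianRing R] (h : SplitQH R A Λ D) (E : Set Λ)
    (hE : IsLowerSet E) (T : Type) [AddCommGroup T] [Module R T] [Module A T] [IsScalarTower R A T]
    [Module.Finite R T] [Module.Projective R T] (hT : ∀ l ∉ E, ExtOneZero A (D l) T) :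
    ∃ (T' : Type) (_ : AddCommGroup T') (_ : Module R T') (_ : Module A T')
      (_ : IsScalarTower R A T') (_ : Module.Finite R T') (_ : Module.Projective R T')
      (f : T →ₗ[A] T'), Function.Injective f ∧
        Filt A (fun Z _ _ => Nonempty (PlainFactor A Λ D E Z)) (T' ⧸ LinearMap.range f) ∧
        ∀ l, ExtOneZero A (D l) T' := by
  induction hn : E.ncard using Nat.strong_induction_on generalizing E T with
  | _ n ih =>
    rcases E.eq_empty_or_nonempty with rfl | hne
    · refine ⟨T, inferInstance, inferInstance, inferInstance, inferInstance, inferInstance,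
        inferInstance, LinearMap.id, Function.injective_id, ?_, fun l => hT l (by simp)⟩
      rw [LinearMap.range_id]
      exact .zero _
    · have hD := h.isStandardSystem
      obtain ⟨μ, hμE, hμ⟩ := E.toFinite.exists_maximal hne
      have hlt : (E \ {μ}).ncard < n := hn ▸ Set.ncard_sdiff_singleton_lt_of_mem hμE
      have hE' : IsLowerSet (E \ {μ}) := fun a b hba ha =>
        ⟨hE hba ha.1, fun hb => ha.2 (le_antisymm (hμ ha.1 (hb ▸ hba)) (hb ▸ hba))⟩
      have := h.algFin
      have := h.P_fin μ
      have := h.P_proj μ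
      have := (h.ker_filt μ).1
      have := h.deltaProjR μ
      obtain ⟨T₁, _, _, _, _, _, m, f, g, hf, hg, hfg, hT₁⟩ :=
        exists_universal_extension (R := R) (T := T) (h.epi μ) (h.epi_surj μ)
          (hD.ext μ μ (lt_irrefl μ))
      have : Module.Projective R (Fin m → D μ) := (show AddOf R (D μ) (Fin m → D μ) from
        ⟨Fin m, inferInstance, LinearMap.single R (fun _ => D μ), LinearMap.proj,
          fun z => Finset.univ_sum_single z⟩).projective
      have : Module.Projective R T₁ := (projective_of_exact (f.restrictScalars R)
        (g.restrictScalars R) hf hg hfg).1 inferInstance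
      obtain ⟨T₂, _, _, _, _, _, _, f', hf', hT₂, hext⟩ := ih _ hlt _ hE' T₁ (fun l hl => by
        by_cases hlμ : l = μ
        · exact hlμ ▸ hT₁
        · have hlE : l ∉ E := fun hlE => hl ⟨hlE, hlμ⟩
          exact .of_exact_right f g hf hg hfg (hT l hlE)
            ((hD.ext l μ fun hlt => hlE (hE hlt.le hμE)).pi_fin m)) rfl
      refine ⟨T₂, inferInstance, inferInstance, inferInstance, inferInstance, inferInstance,
        inferInstance, f' ∘ₗ f, hf'.comp hf, ?_, hext⟩
      obtain ⟨a, b, ha, hb, hab, -, -⟩ := exists_quotient_exact f' (LinearMap.range f').mkQ hf'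
        (Submodule.mkQ_surjective _) (exact_range_mkQ f') (LinearMap.range f)
      rw [LinearMap.range_comp]
      refine .of_exact a b ha hb hab ?_
        (hT₂.mono fun _ _ _ ⟨c⟩ => ⟨c.lam, c.mem.1, c.iso⟩)
      exact (Filt.pi_fin ⟨μ, hμE, .refl _ _⟩ m).equiv ((Submodule.quotEquivOfEq _ _
        (LinearMap.exact_iff.1 hfg).symm).trans (g.quotKerEquivOfSurjective hg)).symm

end UniversalExtension

section Main

variable {R : Type} [CommRing R] {A : Type} [Ring A] [Algebra R A]
  {Λ : Type} {D : Λ → Type} [∀ l, AddCommGroup (D l)]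
  [∀ l, Module R (D l)] [∀ l, Module A (D l)] [∀ l, IsScalarTower R A (D l)] {S : Set Λ}

lemma InFilt.of_filt {X : Type} [AddCommGroup X] [Module A X] [Module.Finite A X]
    (h : Filt A (fun Z _ _ => Nonempty (TensorFactor R A Λ D S Z)) X) : InFilt R A Λ D S X :=
  ⟨inferInstance, h.exists_chain fun _ _ _ _ _ _ e ⟨c⟩ =>
    ⟨c.lam, c.mem, c.U, c.fin, c.proj, e.symm.trans c.iso⟩⟩

omit [∀ l, Module R (D l)] [∀ l, IsScalarTower R A (D l)] in
lemma InFiltPlain.of_filt {X : Type} [AddCommGroup X] [Module A X] [Module.Finite A X]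
    (h : Filt A (fun Z _ _ => Nonempty (PlainFactor A Λ D S Z)) X) : InFiltPlain A Λ D S X :=
  ⟨inferInstance, h.exists_chain fun _ _ _ _ _ _ e ⟨c⟩ => ⟨c.lam, c.mem, e.symm.trans c.iso⟩⟩

omit [∀ l, Module R (D l)] [∀ l, IsScalarTower R A (D l)] in
lemma PlainFactor.addFactor {Z : Type} [AddCommGroup Z] [Module A Z]
    (h : PlainFactor A Λ D S Z) : AddFactor A D S Z :=
  ⟨h.lam, h.mem, AddOf.refl.equiv h.iso.symm⟩

lemma PlainFactor.tensorFactor {Z : Type} [AddCommGroup Z] [Module A Z]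
    (h : PlainFactor A Λ D S Z) : Nonempty (TensorFactor R A Λ D S Z) :=
  ⟨h.lam, h.mem, ModuleCat.of R R, inferInstanceAs (Module.Finite R R),
    inferInstanceAs (Module.Projective R R),
    h.iso.trans (TensorProduct.AlgebraTensorModule.rid R A (D h.lam)).symm⟩

lemma TensorFactor.mono {S' : Set Λ} (hS : S ⊆ S') {Z : Type} [AddCommGroup Z] [Module A Z]
    (h : Nonempty (TensorFactor R A Λ D S Z)) : Nonempty (TensorFactor R A Λ D S' Z) :=
  h.map fun c => ⟨c.lam, hS c.mem, c.U, c.fin, c.proj, c.iso⟩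

/-- If `Hom_A(D, T / D) = 0` and `End_A(D) = R`, then `Hom_A(D, T)` is free on the inclusion. -/
lemma exists_hom_equiv {D T : Type} [AddCommGroup D] [Module R D] [Module A D]
    [IsScalarTower R A D] [AddCommGroup T] [Module R T] [Module A T] [IsScalarTower R A T]
    (e : Module.End A D ≃ₐ[R] R) (f : D →ₗ[A] T) (hf : Function.Injective f)
    (hX : ∀ φ : D →ₗ[A] T ⧸ LinearMap.range f, φ = 0) : Nonempty ((D →ₗ[A] T) ≃ₗ[R] R) := by
  refine ⟨(LinearEquiv.ofBijective (LinearMap.toSpanSingleton R (D →ₗ[A] T) f) ⟨?_, ?_⟩).symm⟩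
  · rw [injective_iff_map_eq_zero]
    intro r hr
    have h0 : algebraMap R (Module.End A D) r = 0 := by
      ext d
      refine hf ?_
      have h1 : f (r • d) = 0 := by
        rw [f.map_smul_of_tower]
        exact LinearMap.congr_fun hr d
      simpa using h1
    simpa using congrArg e h0
  · intro φ
    obtain ⟨ψ, hψ⟩ := exists_comp_eq_of_forall_mem_range f hf φ (fun d => by
      simpa using LinearMap.congr_fun (hX ((LinearMap.range f).mkQ ∘ₗ φ)) d)
    refine ⟨e ψ, LinearMap.ext fun d => ?_⟩
    have : ψ = algebraMap R (Module.End A D) (e ψ) := e.injective (by simp)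
    rw [← hψ d, this]
    simp [f.map_smul_of_tower]

variable [Fintype Λ] [PartialOrder Λ] {N : Λ → Type} [∀ l, AddCommGroup (N l)]
  [∀ l, Module R (N l)] [∀ l, Module A (N l)] [∀ l, IsScalarTower R A (N l)]

/-- A module filtered by `D l` (once, at the bottom) and `D m`, `m < l`, without extensions by
standard modules, maps onto `N l` with kernel filtered by costandard modules. -/
lemma SplitQH.exists_surjective_costandard [IsNoetherianRing R] (h : SplitQH R A Λ D)
    (hN : IsOrthogonalSystem R A D N) (l : Λ) {T : Type} [AddCommGroup T] [Module R T] [Module A T]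
    [IsScalarTower R A T] [Module.Finite R T] [Module.Projective R T] (f : D l →ₗ[A] T)
    (hf : Function.Injective f)
    (hX : Filt A (AddFactor A D {m | m < l}) (T ⧸ LinearMap.range f))
    (hT : ∀ m, ExtOneZero A (D m) T) :
    ∃ g : T →ₗ[A] N l, Function.Surjective g ∧
      Filt A (fun Z _ _ => Nonempty (TensorFactor R A Λ N {m | m < l} Z)) (LinearMap.ker g) := by
  have hD := h.isStandardSystem
  obtain ⟨V, hV, hV', hVT⟩ := hD.exists_ideal hN {m | m < l} (isLowerSet_Iio l)
  obtain ⟨e⟩ := hN.equiv l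
  obtain ⟨W, hWV, hW, -, hWT⟩ := exists_ideal_step (N := N l) hD.hom_eq_zero hD.ext
    (isLowerSet_Iio l).compl (μ := l) (lt_irrefl l) (fun ν hν => hν) (hD.end_eq_smul l) e
    (fun ν hν => hN.hom_eq_zero ν l hν) (fun ν => hN.ext ν l) hV hV'
  obtain ⟨F, hF, hF0⟩ := hWT T hT
  have hTfilt : Filt A (AddFactor A D {m | m ≤ l}) T :=
    .of_exact f (LinearMap.range f).mkQ hf (Submodule.mkQ_surjective _) (exact_range_mkQ f)
      (.of_factor ⟨l, le_refl l, .refl⟩) (hX.mono_addFactor fun m hm => le_of_lt hm)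
  have hWT0 : ∀ t : T, t ∈ annSub W T := fun t w hw a => by
    have := hW.addFactor_hom_eq_zero_left (fun k hk => hTfilt.addFactor_hom_eq_zero_right
      fun m hm => hD.hom_eq_zero k m fun hkm => hk.1 (lt_of_le_of_ne (le_trans hkm hm) hk.2))
      (LinearMap.toSpanSingleton A T (a • t) ∘ₗ W.subtype)
    rw [mul_smul]
    exact LinearMap.congr_fun this ⟨w, hw⟩
  obtain ⟨e'⟩ := h.endIso l
  obtain ⟨q⟩ := exists_hom_equiv e' f hf (hX.addFactor_hom_eq_zero_right fun m hm =>
    hD.hom_eq_zero l m (not_le_of_gt hm))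
  let u : N l ⊗[R] (D l →ₗ[A] T) ≃ₗ[A] N l :=
    (TensorProduct.AlgebraTensorModule.congr (.refl A (N l)) q).trans
      (TensorProduct.AlgebraTensorModule.rid R A (N l))
  let g : T →ₗ[A] N l := u.toLinearMap ∘ₗ F ∘ₗ LinearMap.id.codRestrict (annSub W T) hWT0
  have hg0 : LinearMap.ker g = annSub V T := by
    ext t
    rw [LinearMap.mem_ker]
    exact u.map_eq_zero_iff.trans (hF0 _)
  refine ⟨g, u.surjective.comp (hF.comp fun t => ⟨t, rfl⟩), ?_⟩
  rw [hg0]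
  refine (hVT T hT).mono fun Z _ _ ⟨m, hm, ⟨c⟩⟩ => ?_
  have := h.deltaFinA m
  exact ⟨m, hm, ModuleCat.of R (D m →ₗ[A] T), hom_finite (D m), h.hom_projective hT m, c⟩

end Main

noncomputable section

/-- For each `λ ∈ Λ` there is a partial tilting module `T(λ)` with exact
sequences `0 → Δ(λ) → T(λ) → X(λ) → 0` and `0 → Y(λ) → T(λ) → ∇(λ) → 0`, where `X(λ)` is
filtered by standard modules `Δ(μ)`, `μ < λ`, and `Y(λ)` is filtered by modules
`∇(μ) ⊗_R U`, `μ < λ`, `U ∈ R`-proj. Moreover the inclusion `Δ(λ) → T(λ)` is a left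
`F(∇̃)`-approximation and the surjection `T(λ) → ∇(λ)` is a right `F(Δ̃)`-approximation. -/
theorem partial_tilting_exists_with_approximations
    (R : Type) [CommRing R] [IsNoetherianRing R]
    (A : Type) [Ring A] [Algebra R A]
    (Λ : Type) [Fintype Λ] [PartialOrder Λ]
    (Δ : Λ → Type) [∀ l, AddCommGroup (Δ l)] [∀ l, Module R (Δ l)]
    [∀ l, Module A (Δ l)] [∀ l, IsScalarTower R A (Δ l)]
    (Nb : Λ → Type) [∀ l, AddCommGroup (Nb l)] [∀ l, Module R (Nb l)]
    [∀ l, Module A (Nb l)] [∀ l, IsScalarTower R A (Nb l)]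
    (h : SplitQH R A Λ Δ) (hc : IsCostandard R A Λ Δ Nb) (l : Λ) :
    ∃ T : ModuleCat.{0} A,
      -- `T(λ)` is partial tilting
      (InFilt R A Λ Δ Set.univ T ∧ InFilt R A Λ Nb Set.univ T) ∧
      -- `0 → Δ(λ) → T(λ) → X(λ) → 0` with `X(λ) ∈ F(Δ_{μ<λ})`, and the inclusion is a
      -- left `F(∇̃)`-approximation of `Δ(λ)`
      (∃ f : Δ l →ₗ[A] T, Function.Injective f ∧
        InFiltPlain A Λ Δ {m | m < l} ((T : Type) ⧸ LinearMap.range f) ∧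
        (∀ (C : Type) [AddCommGroup C] [Module A C], InFilt R A Λ Nb Set.univ C →
          ∀ φ : Δ l →ₗ[A] C, ∃ ψ : (T : Type) →ₗ[A] C, ψ.comp f = φ)) ∧
      -- `0 → Y(λ) → T(λ) → ∇(λ) → 0` with `Y(λ) ∈ F(∇̃_{μ<λ})`, and the projection is a
      -- right `F(Δ̃)`-approximation of `∇(λ)`
      (∃ g : (T : Type) →ₗ[A] Nb l, Function.Surjective g ∧
        InFilt R A Λ Nb {m | m < l} ↥(LinearMap.ker g) ∧
        (∀ (C : Type) [AddCommGroup C] [Module A C], InFilt R A Λ Δ Set.univ C →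
          ∀ φ : C →ₗ[A] Nb l, ∃ ψ : C →ₗ[A] T, g.comp ψ = φ)) := by
  have hD := h.isStandardSystem
  have hN := hc.isOrthogonalSystem
  have := h.algFin
  have := h.deltaFinR l
  have := h.deltaProjR l
  obtain ⟨T, _, _, _, _, _, _, f, hf, hX, hT⟩ := h.exists_extension {m | m < l} (isLowerSet_Iio l)
    (Δ l) fun m hm => hD.ext m l hm
  have hX' : Filt A (AddFactor A Δ {m | m < l}) (T ⧸ LinearMap.range f) :=
    hX.mono fun _ _ _ c => c.some.addFactor
  obtain ⟨g, hg, hY⟩ := h.exists_surjective_costandard hN l f hf hX' hT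
  have : Module.Finite A T := .of_restrictScalars_finite R A T
  have : IsNoetherian A T := isNoetherian_of_tower R inferInstance
  have hY' : Filt A (AddFactor A Nb {m | m < l}) (LinearMap.ker g) :=
    hY.mono fun _ _ _ c => c.some.addFactor
  refine ⟨ModuleCat.of A T, ⟨.of_filt (X := T) ?_, .of_filt (X := T) ?_⟩,
    ⟨f, hf, .of_filt hX, fun C _ _ hC φ => ?_⟩, g, hg, .of_filt hY, fun C _ _ hC φ => ?_⟩
  · exact .of_exact f _ hf (Submodule.mkQ_surjective _) (exact_range_mkQ f)
      (.of_factor (PlainFactor.tensorFactor ⟨l, trivial, .refl _ _⟩))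
      (hX.mono fun _ _ _ c => TensorFactor.mono (Set.subset_univ _) c.some.tensorFactor)
  · exact .of_exact _ g (LinearMap.ker g).subtype_injective hg (exact_subtype_ker g)
      (hY.mono fun _ _ _ c => TensorFactor.mono (Set.subset_univ _) c)
      (.of_factor (PlainFactor.tensorFactor ⟨l, trivial, .refl _ _⟩))
  · obtain ⟨ψ, hψ⟩ := hX'.addFactor_extOneZero_left
      (fun k _ => hC.filt.addFactor_extOneZero_right fun m _ => hN.ext k m) _ _ f _ hf
      (Submodule.mkQ_surjective _) (exact_range_mkQ f) φ
    exact ⟨ψ, LinearMap.ext hψ⟩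
  · obtain ⟨ψ, hψ⟩ := (hC.filt.addFactor_extOneZero_left
      fun k _ => hY'.addFactor_extOneZero_right fun m _ => hN.ext k m).lift _ g
      (LinearMap.ker g).subtype_injective hg (exact_subtype_ker g) φ
    exact ⟨ψ, LinearMap.ext hψ⟩

end
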